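/- arXiv:1704.01847 — 2 statements merged into one kernel-verified Lean document; each statement's English description precedes it below -/
import Mathlib

section
/- The sequence of trapezoidally-discretized joint state-path and parameter log-posteriors ℓ̂_i hypo-converges, on the space 𝒵 := W²_n × ℝ^q × ℝ^m equipped with the topology of the norm ‖·‖_{W²} on the first factor and the Euclidean norms on the others, to the continuous-time (Onsager–Machlup) log-posterior ℓ. -/
open MeasureTheory Filter Set

/-- `ℝⁿ` with the Euclidean norm. -/
abbrev Eu (n : ℕ) := EuclideanSpace ℝ (Fin n)

/-- `ln` with values in `ℝ̄ = EReal` and `ln 0 := −∞`. -/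
noncomputable def elog (r : ℝ) : EReal := if r ≤ 0 then ⊥ else ((Real.log r : ℝ) : EReal)

/-- `(x, x')` is an element of `W²` on `[0, t_f]`: `x` is absolutely continuous with
a.e. derivative `x' ∈ L²`. -/
def IsW2 {n : ℕ} (tf : ℝ) (x x' : ℝ → Eu n) : Prop :=
  IntegrableOn x' (Icc 0 tf) ∧ IntegrableOn (fun t => ‖x' t‖ ^ 2) (Icc 0 tf) ∧
    ∀ t ∈ Icc (0:ℝ) tf, x t = x 0 + ∫ s in Ioc (0:ℝ) t, x' s

/-- The `W²` distance `‖x − y‖_{W²}` between `(x, x')` and `(y, y')`. -/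
noncomputable def W2dist {n : ℕ} (tf : ℝ) (x x' y y' : ℝ → Eu n) : ℝ :=
  Real.sqrt (‖x 0 - y 0‖ ^ 2 + ∫ s in Ioc (0:ℝ) tf, ‖x' s - y' s‖ ^ 2)

/-- `g ∈ PL(𝒫, ℝⁿ)`: `g` is continuous on `[0, t_f]` and affine on each subinterval
of the partition `t_0 < t_1 < ⋯ < t_N`. -/
def IsPL {n : ℕ} (tf : ℝ) (N : ℕ) (tP : ℕ → ℝ) (g : ℝ → Eu n) : Prop :=
  ContinuousOn g (Icc 0 tf) ∧
    ∀ k < N, ∃ a b : Eu n, ∀ s ∈ Icc (tP k) (tP (k + 1)), g s = a + s • b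

/-- `zh` is the trapezoidally-discretized clean-state path associated with
`(xh, ζ, ϑ)`. -/
def IsTrapPath {n q m : ℕ} (N : ℕ) (tP : ℕ → ℝ)
    (h : ℝ → Eu n → Eu q → Eu m → Eu q)
    (xh : ℝ → Eu n) (ζ : Eu q) (ϑ : Eu m) (zh : ℝ → Eu q) : Prop :=
  zh 0 = ζ ∧ ∀ k < N, ∀ s ∈ Ioc (tP k) (tP (k + 1)),
    zh s = zh (tP k) + ((s - tP k) / 2) •
      (h (tP k) (xh (tP k)) (zh (tP k)) ϑ +
       h (tP (k + 1)) (xh (tP (k + 1))) (zh (tP (k + 1))) ϑ)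

/-- The sum defining the quadratic (energy) term of the trapezoidally-discretized
log-posterior. -/
noncomputable def trapSum {n q m : ℕ} (N : ℕ) (tP : ℕ → ℝ)
    (f : ℝ → Eu n → Eu q → Eu m → Eu n) (Ginv : Eu n → Eu n)
    (xh : ℝ → Eu n) (zh : ℝ → Eu q) (ϑ : Eu m) : ℝ :=
  ∑ k ∈ Finset.range N, (tP (k + 1) - tP k) *
    ‖Ginv ((tP (k + 1) - tP k)⁻¹ • (xh (tP (k + 1)) - xh (tP k))
      - ((1:ℝ) / 2) • f (tP k) (xh (tP k)) (zh (tP k)) ϑ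
      - ((1:ℝ) / 2) • f (tP (k + 1)) (xh (tP (k + 1))) (zh (tP (k + 1))) ϑ)‖ ^ 2

/-- The sum `Σ_k ln det(I − ½ δ_k ∇ₓf(t_{k+1}, x̂(t_{k+1}), ẑ(t_{k+1}), ϑ))` of the
trapezoidally-discretized log-posterior. -/
noncomputable def detSum {n q m : ℕ} (N : ℕ) (tP : ℕ → ℝ)
    (Dxf : ℝ → Eu n → Eu q → Eu m → (Eu n →L[ℝ] Eu n))
    (xh : ℝ → Eu n) (zh : ℝ → Eu q) (ϑ : Eu m) : EReal :=
  ∑ k ∈ Finset.range N, elog (LinearMap.det (ContinuousLinearMap.toLinearMap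
    ((1 : Eu n →L[ℝ] Eu n) - ((tP (k + 1) - tP k) / 2) •
      Dxf (tP (k + 1)) (xh (tP (k + 1))) (zh (tP (k + 1))) ϑ)))

/-- `v` is the value `ℓ̂(x̂, ζ, ϑ)` of the trapezoidally-discretized joint state-path
and parameter log-posterior: `−∞` unless `x̂ ∈ PL(𝒫)` and `ϑ ∈ S`, in which case it
is `ln ψ + ln π + Σ ln det(I − ½δ_k ∇ₓf) − ½ Σ δ_k |G⁻¹[Δx̂_k/δ_k − ½f̂_k − ½f̂_{k+1}]|²`
with the trapezoidal clean-state path. -/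
def TrapVal {n q m : ℕ} (tf : ℝ) (N : ℕ) (tP : ℕ → ℝ) (S : Set (Eu m))
    (f : ℝ → Eu n → Eu q → Eu m → Eu n) (h : ℝ → Eu n → Eu q → Eu m → Eu q)
    (Dxf : ℝ → Eu n → Eu q → Eu m → (Eu n →L[ℝ] Eu n))
    (ψ : (ℝ → Eu n) → (ℝ → Eu q) → Eu m → ℝ) (pr : Eu n → Eu q → Eu m → ℝ)
    (Ginv : Eu n → Eu n)
    (xh : ℝ → Eu n) (ζ : Eu q) (ϑ : Eu m) (v : EReal) : Prop :=
  (¬(IsPL tf N tP xh ∧ ϑ ∈ S) → v = ⊥) ∧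
  ((IsPL tf N tP xh ∧ ϑ ∈ S) → ∃ zh : ℝ → Eu q, IsTrapPath N tP h xh ζ ϑ zh ∧
    v = elog (ψ xh zh ϑ) + elog (pr (xh 0) ζ ϑ) + detSum N tP Dxf xh zh ϑ
      - ((((1:ℝ) / 2) * trapSum N tP f Ginv xh zh ϑ : ℝ) : EReal))

/-- `v` is the value `ℓ(x, z₀, θ)` of the continuous-time (Onsager–Machlup)
log-posterior: `−∞` unless `θ ∈ S`, in which case it is
`ln ψ + ln π − ½ ∫ |G⁻¹[f − ẋ]|² dt − ½ ∫ divₓ f dt` with `z` the solution of the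
clean-state ODE. -/
def OMVal {n q m : ℕ} (tf : ℝ) (S : Set (Eu m))
    (f : ℝ → Eu n → Eu q → Eu m → Eu n) (h : ℝ → Eu n → Eu q → Eu m → Eu q)
    (Dxf : ℝ → Eu n → Eu q → Eu m → (Eu n →L[ℝ] Eu n))
    (ψ : (ℝ → Eu n) → (ℝ → Eu q) → Eu m → ℝ) (pr : Eu n → Eu q → Eu m → ℝ)
    (Ginv : Eu n → Eu n)
    (x x' : ℝ → Eu n) (z0 : Eu q) (θ : Eu m) (v : EReal) : Prop :=
  (θ ∉ S → v = ⊥) ∧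
  (θ ∈ S → ∃ z : ℝ → Eu q, ContinuousOn z (Icc 0 tf) ∧
    (∀ t ∈ Icc (0:ℝ) tf, z t = z0 + ∫ s in Ioc (0:ℝ) t, h s (x s) (z s) θ) ∧
    v = elog (ψ x z θ) + elog (pr (x 0) z0 θ)
      - ((((1:ℝ) / 2) * ∫ t in Ioc (0:ℝ) tf,
          ‖Ginv (f t (x t) (z t) θ - x' t)‖ ^ 2 : ℝ) : EReal)
      - ((((1:ℝ) / 2) * ∫ t in Ioc (0:ℝ) tf,
          LinearMap.trace ℝ (Eu n)
            (ContinuousLinearMap.toLinearMap (Dxf t (x t) (z t) θ)) : ℝ) : EReal))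
/-!
Along `(xᵢ, ζᵢ, ϑᵢ) → (x, z₀, θ)` with `xᵢ` piecewise linear and `ϑᵢ ∈ S`, the discretized
log-posteriors actually converge to `ℓ(x, z₀, θ)`. All other terms of a sequence have value `-∞` and
do not affect the limsup, and a recovery sequence only has to be piecewise linear.

`W²`-convergence controls the paths uniformly and their derivatives in `L²`. The trapezoidal clean
states converge uniformly by a Gronwall estimate with look-ahead, so both likelihood and prior
converge. Since `det` has derivative `tr` at the identity, `ln det (I - ½ δₖ Dₖ) = -½ δₖ tr Dₖ +
o(δₖ)` uniformly in `k`, and the log-determinants form a Riemann sum of `-½ ∫ divₓ f`. On each cell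
the difference quotient of `xᵢ` is the average of its derivative. Averaging over cells is a
contraction of `L²` that converges strongly to the identity as the mesh shrinks, so the energy is
the squared `L²` norm of a sequence converging to `G⁻¹ (ẋ - f)`. The same averages, integrated,
give the recovery sequence.
-/

open scoped Topology

/-- `0 = t 0 < t 1 < ⋯ < t N = T`; the values `t k` with `k > N` are irrelevant. -/
structure IsPartition (T : ℝ) (N : ℕ) (t : ℕ → ℝ) : Prop where
  zero : t 0 = 0
  last : t N = T
  lt_succ : ∀ k < N, t k < t (k + 1)

/-- The largest step of the partition `t 0 < ⋯ < t N`. -/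
noncomputable def mesh (N : ℕ) (t : ℕ → ℝ) : ℝ := ⨆ k : Fin N, (t (k.1 + 1) - t k.1)

/-- The index `k` of the cell `(t k, t (k + 1)]` of a partition that contains `s`. Functions that
are constant on the cells are written `fun s ↦ c (cellIndex t s)`. -/
noncomputable def cellIndex (t : ℕ → ℝ) (s : ℝ) : ℕ := sInf {k | s ≤ t (k + 1)}

/-- The left endpoint of the cell that contains `s`. -/
noncomputable def leftNode (t : ℕ → ℝ) (s : ℝ) : ℝ := t (cellIndex t s)

/-- The right endpoint of the cell that contains `s`. -/
noncomputable def rightNode (t : ℕ → ℝ) (s : ℝ) : ℝ := t (cellIndex t s + 1)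

lemma step_le_mesh {N k : ℕ} {t : ℕ → ℝ} (hk : k < N) : t (k + 1) - t k ≤ mesh N t :=
  le_ciSup (f := fun k : Fin N ↦ t (k.1 + 1) - t k.1) (finite_range _).bddAbove ⟨k, hk⟩

namespace IsPartition

variable {T : ℝ} {N : ℕ} {t : ℕ → ℝ}

lemma node_le_node (ht : IsPartition T N t) {j k : ℕ} (hjk : j ≤ k) (hk : k ≤ N) : t j ≤ t k := by
  induction k, hjk using Nat.le_induction with
  | base => exact le_rfl
  | succ k _ ih => exact (ih (by omega)).trans (ht.lt_succ k hk).le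

lemma node_mem_Icc (ht : IsPartition T N t) {k : ℕ} (hk : k ≤ N) : t k ∈ Icc 0 T :=
  ⟨ht.zero ▸ ht.node_le_node k.zero_le hk, ht.last ▸ ht.node_le_node hk le_rfl⟩

lemma length_nonneg (ht : IsPartition T N t) : 0 ≤ T :=
  ht.last ▸ (ht.node_mem_Icc le_rfl).1

lemma cell_subset (ht : IsPartition T N t) {k : ℕ} (hk : k < N) :
    Ioc (t k) (t (k + 1)) ⊆ Ioc 0 T :=
  Ioc_subset_Ioc (ht.node_mem_Icc hk.le).1 (ht.node_mem_Icc hk).2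

lemma cellIndex_eq (ht : IsPartition T N t) {k : ℕ} (hk : k < N) {s : ℝ}
    (hs : s ∈ Ioc (t k) (t (k + 1))) : cellIndex t s = k := by
  refine le_antisymm (Nat.sInf_le hs.2) (not_lt.1 fun hlt ↦ ?_)
  have hmem : s ≤ t (cellIndex t s + 1) := Nat.sInf_mem (s := {k | s ≤ t (k + 1)}) ⟨k, hs.2⟩
  exact hs.1.not_ge (hmem.trans (ht.node_le_node hlt hk.le))

lemma exists_mem_cell (ht : IsPartition T N t) {s : ℝ} (hs : s ∈ Ioc 0 T) :
    ∃ k < N, s ∈ Ioc (t k) (t (k + 1)) := by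
  by_contra! hnot
  have node_lt : ∀ k ≤ N, t k < s := by
    intro k
    induction k with
    | zero => exact fun _ ↦ ht.zero ▸ hs.1
    | succ k ih => exact fun hk ↦ not_le.1 fun hle ↦ hnot k hk ⟨ih (by omega), hle⟩
  exact (node_lt N le_rfl).not_ge (ht.last ▸ hs.2)

lemma cellIndex_lt (ht : IsPartition T N t) {s : ℝ} (hs : s ∈ Ioc 0 T) : cellIndex t s < N := by
  obtain ⟨k, hk, hsk⟩ := ht.exists_mem_cell hs
  rwa [ht.cellIndex_eq hk hsk]

lemma mem_cell (ht : IsPartition T N t) {s : ℝ} (hs : s ∈ Ioc 0 T) :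
    s ∈ Ioc (leftNode t s) (rightNode t s) := by
  obtain ⟨k, hk, hsk⟩ := ht.exists_mem_cell hs
  rwa [leftNode, rightNode, ht.cellIndex_eq hk hsk]

lemma leftNode_mem_Icc (ht : IsPartition T N t) {s : ℝ} (hs : s ∈ Ioc 0 T) :
    leftNode t s ∈ Icc 0 T :=
  ht.node_mem_Icc (ht.cellIndex_lt hs).le

lemma rightNode_mem_Icc (ht : IsPartition T N t) {s : ℝ} (hs : s ∈ Ioc 0 T) :
    rightNode t s ∈ Icc 0 T :=
  ht.node_mem_Icc (ht.cellIndex_lt hs)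

lemma rightNode_sub_leftNode_le (ht : IsPartition T N t) {s : ℝ} (hs : s ∈ Ioc 0 T) :
    rightNode t s - leftNode t s ≤ mesh N t :=
  step_le_mesh (ht.cellIndex_lt hs)

/-! ### Integrals over the cells -/

section Integral

variable {E : Type*} [NormedAddCommGroup E]

lemma aestronglyMeasurable_comp_cellIndex (ht : IsPartition T N t) (c : ℕ → E) :
    AEStronglyMeasurable (fun s ↦ c (cellIndex t s)) (volume.restrict (Ioc 0 T)) := by
  have hmono : MonotoneOn (cellIndex t) (Ioc 0 T) := fun r _ s hs hrs ↦
    Nat.sInf_le (hrs.trans (ht.mem_cell hs).2)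
  exact (StronglyMeasurable.of_discrete (f := c)).aestronglyMeasurable.comp_aemeasurable
    (aemeasurable_restrict_of_monotoneOn measurableSet_Ioc hmono)

lemma memLp_comp_cellIndex (ht : IsPartition T N t) (c : ℕ → E) (p : ENNReal) :
    MemLp (fun s ↦ c (cellIndex t s)) p (volume.restrict (Ioc 0 T)) := by
  refine .of_bound (ht.aestronglyMeasurable_comp_cellIndex c) (∑ k ∈ Finset.range N, ‖c k‖) ?_
  refine ae_restrict_of_forall_mem measurableSet_Ioc fun s hs ↦ ?_
  exact Finset.single_le_sum (f := fun k ↦ ‖c k‖) (fun _ _ ↦ norm_nonneg _)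
    (Finset.mem_range.2 (ht.cellIndex_lt hs))

lemma integrableOn_comp_cellIndex (ht : IsPartition T N t) (c : ℕ → E) :
    IntegrableOn (fun s ↦ c (cellIndex t s)) (Ioc 0 T) :=
  (ht.memLp_comp_cellIndex c 1).integrable le_rfl

variable [NormedSpace ℝ E]

lemma setIntegral_eq_sum (ht : IsPartition T N t) {v : ℝ → E} (hv : IntegrableOn v (Ioc 0 T)) :
    ∫ s in Ioc 0 T, v s = ∑ k ∈ Finset.range N, ∫ s in Ioc (t k) (t (k + 1)), v s := by
  have hint : ∀ k < N, IntervalIntegrable v volume (t k) (t (k + 1)) := fun k hk ↦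
    (intervalIntegrable_iff_integrableOn_Ioc_of_le (ht.lt_succ k hk).le).2
      (hv.mono_set (ht.cell_subset hk))
  have hsum := intervalIntegral.sum_integral_adjacent_intervals hint
  rw [ht.zero, ht.last, intervalIntegral.integral_of_le ht.length_nonneg] at hsum
  rw [← hsum]
  exact Finset.sum_congr rfl fun k hk ↦
    intervalIntegral.integral_of_le (ht.lt_succ k (Finset.mem_range.1 hk)).le

lemma setIntegral_cell_comp_cellIndex [CompleteSpace E] (ht : IsPartition T N t) (c : ℕ → E)
    {k : ℕ} (hk : k < N) {s : ℝ} (hs : s ∈ Icc (t k) (t (k + 1))) :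
    ∫ r in Ioc (t k) s, c (cellIndex t r) = (s - t k) • c k := by
  have hconst : EqOn (fun r ↦ c (cellIndex t r)) (fun _ ↦ c k) (Ioc (t k) s) := fun r hr ↦
    congrArg c (ht.cellIndex_eq hk (Ioc_subset_Ioc_right hs.2 hr))
  rw [setIntegral_congr_fun measurableSet_Ioc hconst, setIntegral_const, Measure.real,
    Real.volume_Ioc, ENNReal.toReal_ofReal (sub_nonneg.2 hs.1)]

lemma setIntegral_comp_cellIndex [CompleteSpace E] (ht : IsPartition T N t) (c : ℕ → E) :
    ∫ s in Ioc 0 T, c (cellIndex t s) = ∑ k ∈ Finset.range N, (t (k + 1) - t k) • c k := by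
  rw [ht.setIntegral_eq_sum (ht.integrableOn_comp_cellIndex c)]
  refine Finset.sum_congr rfl fun k hk ↦ ?_
  have hk := Finset.mem_range.1 hk
  exact ht.setIntegral_cell_comp_cellIndex c hk (right_mem_Icc.2 (ht.lt_succ k hk).le)

lemma primitive_comp_cellIndex [CompleteSpace E] (ht : IsPartition T N t) (c : ℕ → E)
    {k : ℕ} (hk : k < N) {s : ℝ} (hs : s ∈ Icc (t k) (t (k + 1))) :
    ∫ r in Ioc 0 s, c (cellIndex t r) =
      (∫ r in Ioc 0 (t k), c (cellIndex t r)) + (s - t k) • c k := by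
  have hint := ht.integrableOn_comp_cellIndex c
  have hk0 := ht.node_mem_Icc hk.le
  rw [← ht.setIntegral_cell_comp_cellIndex c hk hs, ← Ioc_union_Ioc_eq_Ioc hk0.1 hs.1]
  exact setIntegral_union (Ioc_disjoint_Ioc_of_le le_rfl) measurableSet_Ioc
    (hint.mono_set (Ioc_subset_Ioc_right hk0.2))
    (hint.mono_set (Ioc_subset_Ioc hk0.1 (hs.2.trans (ht.node_mem_Icc hk).2)))

lemma eq_add_primitive_comp_cellIndex [CompleteSpace E] (ht : IsPartition T N t) {y : ℝ → E}
    {c : ℕ → E}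
    (hy : ∀ k < N, ∀ s ∈ Ioc (t k) (t (k + 1)), y s = y (t k) + (s - t k) • c k)
    {s : ℝ} (hs : s ∈ Icc 0 T) : y s = y 0 + ∫ r in Ioc 0 s, c (cellIndex t r) := by
  have node : ∀ k ≤ N, y (t k) = y 0 + ∫ r in Ioc 0 (t k), c (cellIndex t r) := by
    intro k
    induction k with
    | zero => simp [ht.zero]
    | succ k ih =>
      intro hk
      have hlt := ht.lt_succ k hk
      rw [hy k hk _ (right_mem_Ioc.2 hlt), ih (by omega),
        ht.primitive_comp_cellIndex c hk (right_mem_Icc.2 hlt.le), add_assoc]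
  rcases hs.1.eq_or_lt with rfl | hs0
  · simp
  · obtain ⟨k, hk, hsk⟩ := ht.exists_mem_cell ⟨hs0, hs.2⟩
    rw [hy k hk s hsk, node k hk.le, ht.primitive_comp_cellIndex c hk (Ioc_subset_Icc_self hsk),
      add_assoc]

end Integral

end IsPartition

/-! ### Uniform convergence along partitions of vanishing mesh -/

section Uniform

variable {ι α X Y : Type*} {l : Filter ι}

lemma tendstoUniformlyOn_comp_of_continuous [UniformSpace X] [UniformSpace Y] [TopologicalSpace α]
    {F : X → Y} (hF : Continuous F) {γ : ι → α → X} {γ₀ : α → X} {K : Set α} (hK : IsCompact K)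
    (hγ₀ : ContinuousOn γ₀ K) (hγ : TendstoUniformlyOn γ γ₀ l K) :
    TendstoUniformlyOn (fun i s ↦ F (γ i s)) (fun s ↦ F (γ₀ s)) l K := by
  intro V hV
  have hU := (hK.image_of_continuousOn hγ₀).uniformContinuousAt_of_continuousAt F
    (fun _ _ ↦ hF.continuousAt) hV
  filter_upwards [hγ _ hU] with i hi s hs
  exact hi s hs (mem_image_of_mem γ₀ hs)

lemma tendstoUniformlyOn_comp_of_uniformContinuousOn [UniformSpace X] [UniformSpace Y]
    {F : ι → X → Y} {F₀ : X → Y} {σ : ι → α → X} {σ₀ : α → X} {K : Set X} {s : Set α}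
    (hF : TendstoUniformlyOn F F₀ l K) (hF₀ : UniformContinuousOn F₀ K)
    (hσ : TendstoUniformlyOn σ σ₀ l s) (hσK : ∀ i, MapsTo (σ i) s K) (hσ₀K : MapsTo σ₀ s K) :
    TendstoUniformlyOn (fun i r ↦ F i (σ i r)) (fun r ↦ F₀ (σ₀ r)) l s := by
  intro V hV
  obtain ⟨W, hW, hWV⟩ := comp_mem_uniformity_sets hV
  have hnear := hF₀.comp_tendstoUniformlyOn_eventually (.of_forall hσK) hσ₀K hσ W hW
  filter_upwards [hF W hW, hnear] with i hFi hnear r hr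
  exact hWV ⟨F₀ (σ i r), hnear r hr, hFi _ (hσK i hr)⟩

variable {T : ℝ} {N : ι → ℕ} {t : ι → ℕ → ℝ}

lemma tendstoUniformlyOn_of_mem_cell (ht : ∀ i, IsPartition T (N i) (t i))
    (hmesh : Tendsto (fun i ↦ mesh (N i) (t i)) l (𝓝 0)) {σ : ι → ℝ → ℝ}
    (hσ : ∀ i, ∀ s ∈ Ioc 0 T, σ i s ∈ Icc (leftNode (t i) s) (rightNode (t i) s)) :
    TendstoUniformlyOn σ id l (Ioc 0 T) := by
  refine Metric.tendstoUniformlyOn_iff.2 fun ε hε ↦ ?_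
  filter_upwards [hmesh.eventually_lt_const hε] with i hi s hs
  calc dist s (σ i s) ≤ rightNode (t i) s - leftNode (t i) s :=
        Real.dist_le_of_mem_Icc (Ioc_subset_Icc_self ((ht i).mem_cell hs)) (hσ i s hs)
    _ ≤ mesh (N i) (t i) := (ht i).rightNode_sub_leftNode_le hs
    _ < ε := hi

variable [UniformSpace X] {w : ι → ℝ → X} {w₀ : ℝ → X}

lemma tendstoUniformlyOn_comp_leftNode (ht : ∀ i, IsPartition T (N i) (t i))
    (hmesh : Tendsto (fun i ↦ mesh (N i) (t i)) l (𝓝 0)) (hw₀ : ContinuousOn w₀ (Icc 0 T))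
    (hw : TendstoUniformlyOn w w₀ l (Icc 0 T)) :
    TendstoUniformlyOn (fun i s ↦ w i (leftNode (t i) s)) w₀ l (Ioc 0 T) :=
  tendstoUniformlyOn_comp_of_uniformContinuousOn hw
    (isCompact_Icc.uniformContinuousOn_of_continuous hw₀)
    (tendstoUniformlyOn_of_mem_cell ht hmesh fun i _ hs ↦
      left_mem_Icc.2 (((ht i).mem_cell hs).1.le.trans ((ht i).mem_cell hs).2))
    (fun i _ hs ↦ (ht i).leftNode_mem_Icc hs) fun _ hs ↦ Ioc_subset_Icc_self hs

lemma tendstoUniformlyOn_comp_rightNode (ht : ∀ i, IsPartition T (N i) (t i))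
    (hmesh : Tendsto (fun i ↦ mesh (N i) (t i)) l (𝓝 0)) (hw₀ : ContinuousOn w₀ (Icc 0 T))
    (hw : TendstoUniformlyOn w w₀ l (Icc 0 T)) :
    TendstoUniformlyOn (fun i s ↦ w i (rightNode (t i) s)) w₀ l (Ioc 0 T) :=
  tendstoUniformlyOn_comp_of_uniformContinuousOn hw
    (isCompact_Icc.uniformContinuousOn_of_continuous hw₀)
    (tendstoUniformlyOn_of_mem_cell ht hmesh fun i _ hs ↦
      right_mem_Icc.2 (((ht i).mem_cell hs).1.le.trans ((ht i).mem_cell hs).2))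
    (fun i _ hs ↦ (ht i).rightNode_mem_Icc hs) fun _ hs ↦ Ioc_subset_Icc_self hs

end Uniform

/-! ### Convergence in `L²` -/

section L2

variable {ι α E F : Type*} {l : Filter ι} [MeasurableSpace α] {μ : Measure α}
  [NormedAddCommGroup E] [NormedAddCommGroup F]

lemma integral_norm_sq_eq_eLpNorm {u : α → E} (hu : MemLp u 2 μ) :
    ∫ a, ‖u a‖ ^ 2 ∂μ = (eLpNorm u 2 μ).toReal ^ 2 := by
  have hint : 0 ≤ ∫ a, ‖u a‖ ^ 2 ∂μ := integral_nonneg fun _ ↦ sq_nonneg _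
  rw [hu.eLpNorm_eq_integral_rpow_norm two_ne_zero ENNReal.ofNat_ne_top]
  simp only [ENNReal.toReal_ofNat, Real.rpow_ofNat]
  rw [ENNReal.toReal_ofReal (by positivity), ← Real.rpow_mul_natCast hint]
  norm_num

lemma eLpNorm_le_of_integral_norm_sq_le {u : α → E} {v : α → F} (hu : MemLp u 2 μ)
    (hv : MemLp v 2 μ) (h : ∫ a, ‖u a‖ ^ 2 ∂μ ≤ ∫ a, ‖v a‖ ^ 2 ∂μ) :
    eLpNorm u 2 μ ≤ eLpNorm v 2 μ := by
  rw [integral_norm_sq_eq_eLpNorm hu, integral_norm_sq_eq_eLpNorm hv,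
    sq_le_sq₀ ENNReal.toReal_nonneg ENNReal.toReal_nonneg] at h
  exact (ENNReal.toReal_le_toReal hu.eLpNorm_ne_top hv.eLpNorm_ne_top).1 h

lemma tendsto_integral_norm_sq {u : ι → α → E} {u₀ : α → E} (hu : ∀ i, MemLp (u i) 2 μ)
    (hu₀ : MemLp u₀ 2 μ) (h : Tendsto (fun i ↦ eLpNorm (u i - u₀) 2 μ) l (𝓝 0)) :
    Tendsto (fun i ↦ ∫ a, ‖u i a‖ ^ 2 ∂μ) l (𝓝 (∫ a, ‖u₀ a‖ ^ 2 ∂μ)) := by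
  have hnorm := ((Lp.tendsto_Lp_iff_tendsto_eLpNorm'' u hu u₀ hu₀).2 h).norm.pow 2
  simpa only [Lp.norm_toLp, ← integral_norm_sq_eq_eLpNorm, hu, hu₀] using hnorm

lemma tendsto_eLpNorm_sub_sub_sub {u v : ι → α → E} {u₀ v₀ : α → E} {p : ENNReal} (hp : 1 ≤ p)
    (hu : ∀ i, MemLp (u i) p μ) (hu₀ : MemLp u₀ p μ) (hv : ∀ i, MemLp (v i) p μ)
    (hv₀ : MemLp v₀ p μ) (huu₀ : Tendsto (fun i ↦ eLpNorm (u i - u₀) p μ) l (𝓝 0))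
    (hvv₀ : Tendsto (fun i ↦ eLpNorm (v i - v₀) p μ) l (𝓝 0)) :
    Tendsto (fun i ↦ eLpNorm (u i - v i - (u₀ - v₀)) p μ) l (𝓝 0) := by
  refine tendsto_of_tendsto_of_tendsto_of_le_of_le tendsto_const_nhds
    (by simpa only [add_zero] using huu₀.add hvv₀) (fun _ ↦ zero_le) fun i ↦ ?_
  rw [sub_sub_sub_comm]
  exact eLpNorm_sub_le ((hu i).sub hu₀).aestronglyMeasurable
    ((hv i).sub hv₀).aestronglyMeasurable hp

lemma tendsto_eLpNorm_clm_comp_sub [NormedSpace ℝ E] [NormedSpace ℝ F] (A : E →L[ℝ] F)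
    {u : ι → α → E} {u₀ : α → E} {p : ENNReal}
    (h : Tendsto (fun i ↦ eLpNorm (u i - u₀) p μ) l (𝓝 0)) :
    Tendsto (fun i ↦ eLpNorm ((fun a ↦ A (u i a)) - fun a ↦ A (u₀ a)) p μ) l (𝓝 0) := by
  have hbound := ENNReal.Tendsto.const_mul h (.inr (ENNReal.ofReal_ne_top (r := ‖A‖)))
  rw [mul_zero] at hbound
  refine tendsto_of_tendsto_of_tendsto_of_le_of_le tendsto_const_nhds hbound
    (fun _ ↦ zero_le) fun i ↦ eLpNorm_le_mul_eLpNorm_of_ae_le_mul (.of_forall fun a ↦ ?_) p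
  simpa only [Pi.sub_apply, map_sub] using A.le_opNorm (u i a - u₀ a)

lemma tendsto_eLpNorm_sub_of_tendstoUniformlyOn {u : ι → α → E} {u₀ : α → E} {s : Set α}
    (hs : MeasurableSet s) (hμs : μ s ≠ ⊤) (p : ENNReal) (h : TendstoUniformlyOn u u₀ l s) :
    Tendsto (fun i ↦ eLpNorm (u i - u₀) p (μ.restrict s)) l (𝓝 0) := by
  set K := μ.restrict s univ ^ p.toReal⁻¹
  have hK : K ≠ ⊤ := ENNReal.rpow_ne_top_of_nonneg (by positivity) (by simpa using hμs)
  have hbound : Tendsto (fun C ↦ K * ENNReal.ofReal C) (𝓝[>] 0) (𝓝 0) := by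
    have hof : Tendsto ENNReal.ofReal (𝓝[>] 0) (𝓝 0) := by
      simpa using (ENNReal.continuous_ofReal.tendsto 0).mono_left nhdsWithin_le_nhds
    simpa only [mul_zero] using ENNReal.Tendsto.const_mul hof (.inr hK)
  refine ENNReal.tendsto_nhds_zero.2 fun ε hε ↦ ?_
  obtain ⟨C, hCε, hC⟩ :=
    ((ENNReal.tendsto_nhds_zero.1 hbound ε hε).and self_mem_nhdsWithin).exists
  filter_upwards [Metric.tendstoUniformlyOn_iff.1 h C hC] with i hi
  refine (eLpNorm_le_of_ae_bound (ae_restrict_of_forall_mem hs fun a ha ↦ ?_)).trans hCε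
  simpa only [Pi.sub_apply, ← dist_eq_norm, dist_comm] using (hi a ha).le

end L2

lemma memLp_of_continuousOn_Icc {E : Type*} [NormedAddCommGroup E] {a b : ℝ} {u : ℝ → E}
    (hu : ContinuousOn u (Icc a b)) (p : ENNReal) : MemLp u p (volume.restrict (Ioc a b)) := by
  obtain ⟨C, hC⟩ := isCompact_Icc.exists_bound_of_continuousOn hu
  have hmeas : AEStronglyMeasurable u (volume.restrict (Ioc a b)) :=
    (hu.mono Ioc_subset_Icc_self).aestronglyMeasurable measurableSet_Ioc
  exact .of_bound hmeas C
    (ae_restrict_of_forall_mem measurableSet_Ioc fun s hs ↦ hC s (Ioc_subset_Icc_self hs))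

/-! ### Cell averages -/

section CellAverage

variable {ι E : Type*} [NormedAddCommGroup E] [NormedSpace ℝ E]

/-- The `L²` projection of `v` onto functions that are constant on the cells of the partition: on
each cell, the mean of `v` over that cell. -/
noncomputable def cellAverage (t : ℕ → ℝ) (v : ℝ → E) (s : ℝ) : E :=
  ⨍ r in Ioc (leftNode t s) (rightNode t s), v r

variable {T : ℝ} {N : ℕ} {t : ℕ → ℝ}

lemma IsPartition.memLp_cellAverage (ht : IsPartition T N t) (v : ℝ → E) (p : ENNReal) :
    MemLp (cellAverage t v) p (volume.restrict (Ioc 0 T)) :=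
  ht.memLp_comp_cellIndex (fun k ↦ ⨍ r in Ioc (t k) (t (k + 1)), v r) p

lemma IsPartition.cellAverage_sub (ht : IsPartition T N t) {u v : ℝ → E}
    (hu : IntegrableOn u (Ioc 0 T)) (hv : IntegrableOn v (Ioc 0 T)) {s : ℝ} (hs : s ∈ Ioc 0 T) :
    cellAverage t (u - v) s = cellAverage t u s - cellAverage t v s := by
  have hsub : Ioc (leftNode t s) (rightNode t s) ⊆ Ioc 0 T := ht.cell_subset (ht.cellIndex_lt hs)
  simp only [cellAverage, setAverage_eq, Pi.sub_apply, ← smul_sub]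
  rw [integral_sub (hu.mono_set hsub) (hv.mono_set hsub)]

lemma mul_norm_sq_setAverage_le [CompleteSpace E] {α : Type*} [MeasurableSpace α] {μ : Measure α}
    {s : Set α} (hμ₀ : μ s ≠ 0) (hμ : μ s ≠ ⊤) {v : α → E} (hv : MemLp v 2 (μ.restrict s)) :
    μ.real s * ‖⨍ a in s, v a ∂μ‖ ^ 2 ≤ ∫ a in s, ‖v a‖ ^ 2 ∂μ := by
  have : IsFiniteMeasure (μ.restrict s) := isFiniteMeasure_restrict.2 hμ
  have hreal : 0 < μ.real s := ENNReal.toReal_pos hμ₀ hμ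
  have jensen : ‖⨍ a in s, v a ∂μ‖ ^ 2 ≤ ⨍ a in s, ‖v a‖ ^ 2 ∂μ :=
    ((convexOn_norm convex_univ).pow (fun _ _ ↦ norm_nonneg _) 2).map_set_average_le
      (by fun_prop) isClosed_univ hμ₀ hμ (.of_forall fun _ ↦ mem_univ _)
      (hv.integrable one_le_two) (hv.integrable_norm_pow two_ne_zero)
  rwa [setAverage_eq μ fun a ↦ ‖v a‖ ^ 2, smul_eq_mul, ← div_eq_inv_mul,
    le_div_iff₀' hreal] at jensen

lemma IsPartition.eLpNorm_cellAverage_le [CompleteSpace E] (ht : IsPartition T N t) {v : ℝ → E}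
    (hv : MemLp v 2 (volume.restrict (Ioc 0 T))) :
    eLpNorm (cellAverage t v) 2 (volume.restrict (Ioc 0 T)) ≤
      eLpNorm v 2 (volume.restrict (Ioc 0 T)) := by
  refine eLpNorm_le_of_integral_norm_sq_le (ht.memLp_cellAverage v 2) hv ?_
  calc ∫ s in Ioc 0 T, ‖cellAverage t v s‖ ^ 2
      = ∑ k ∈ Finset.range N,
          (t (k + 1) - t k) • ‖⨍ r in Ioc (t k) (t (k + 1)), v r‖ ^ 2 :=
        ht.setIntegral_comp_cellIndex fun k ↦ ‖⨍ r in Ioc (t k) (t (k + 1)), v r‖ ^ 2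
    _ ≤ ∑ k ∈ Finset.range N, ∫ s in Ioc (t k) (t (k + 1)), ‖v s‖ ^ 2 := by
        refine Finset.sum_le_sum fun k hk ↦ ?_
        have hk := Finset.mem_range.1 hk
        have hlt := ht.lt_succ k hk
        have hcell := mul_norm_sq_setAverage_le (μ := volume) (s := Ioc (t k) (t (k + 1)))
          (by simpa using hlt) measure_Ioc_lt_top.ne
          (hv.mono_measure (Measure.restrict_mono (ht.cell_subset hk) le_rfl))
        rwa [Real.volume_real_Ioc_of_le hlt.le] at hcell
    _ = ∫ s in Ioc 0 T, ‖v s‖ ^ 2 :=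
        (ht.setIntegral_eq_sum (hv.integrable_norm_pow two_ne_zero)).symm

variable {l : Filter ι} {N : ι → ℕ} {t : ι → ℕ → ℝ} [CompleteSpace E]

lemma tendstoUniformlyOn_cellAverage (ht : ∀ i, IsPartition T (N i) (t i))
    (hmesh : Tendsto (fun i ↦ mesh (N i) (t i)) l (𝓝 0)) {g : ℝ → E}
    (hg : ContinuousOn g (Icc 0 T)) :
    TendstoUniformlyOn (fun i ↦ cellAverage (t i) g) g l (Ioc 0 T) := by
  have hunif := Metric.uniformContinuousOn_iff_le.1
    (isCompact_Icc.uniformContinuousOn_of_continuous hg)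
  refine Metric.tendstoUniformlyOn_iff.2 fun ε hε ↦ ?_
  obtain ⟨δ, hδ, hgδ⟩ := hunif (ε / 2) (half_pos hε)
  filter_upwards [hmesh.eventually_le_const hδ] with i hi s hs
  have hcell := (ht i).mem_cell hs
  have hlt : leftNode (t i) s < rightNode (t i) s := hcell.1.trans_le hcell.2
  have hsub := (ht i).cell_subset ((ht i).cellIndex_lt hs)
  have hmem : cellAverage (t i) g s ∈ Metric.closedBall (g s) (ε / 2) := by
    refine (convex_closedBall _ _).set_average_mem Metric.isClosed_closedBall
      (by simpa using hlt) measure_Ioc_lt_top.ne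
      (ae_restrict_of_forall_mem measurableSet_Ioc fun r hr ↦ ?_)
      ((hg.integrableOn_Icc).mono_set (hsub.trans Ioc_subset_Icc_self))
    have hdist : dist r s ≤ rightNode (t i) s - leftNode (t i) s :=
      Real.dist_le_of_mem_Icc (Ioc_subset_Icc_self hr) (Ioc_subset_Icc_self hcell)
    exact hgδ r (Ioc_subset_Icc_self (hsub hr)) s (Ioc_subset_Icc_self hs)
      (hdist.trans (((ht i).rightNode_sub_leftNode_le hs).trans hi))
  exact (Metric.mem_closedBall'.1 hmem).trans_lt (half_lt_self hε)

lemma IsPartition.eLpNorm_cellAverage_sub_le {N : ℕ} {t : ℕ → ℝ} (ht : IsPartition T N t)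
    {u v w : ℝ → E} (hu : MemLp u 2 (volume.restrict (Ioc 0 T)))
    (hv : MemLp v 2 (volume.restrict (Ioc 0 T))) (hw : MemLp w 2 (volume.restrict (Ioc 0 T))) :
    eLpNorm (cellAverage t v - w) 2 (volume.restrict (Ioc 0 T)) ≤
      eLpNorm (v - u) 2 (volume.restrict (Ioc 0 T)) +
        eLpNorm (cellAverage t u - w) 2 (volume.restrict (Ioc 0 T)) := by
  have hsplit : cellAverage t v - w =ᵐ[volume.restrict (Ioc 0 T)]
      cellAverage t (v - u) + (cellAverage t u - w) :=
    ae_restrict_of_forall_mem measurableSet_Ioc fun s hs ↦ by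
      simp only [Pi.sub_apply, Pi.add_apply,
        ht.cellAverage_sub (hv.integrable one_le_two) (hu.integrable one_le_two) hs]
      abel
  rw [eLpNorm_congr_ae hsplit]
  refine (eLpNorm_add_le (ht.memLp_cellAverage _ 2).aestronglyMeasurable
    ((ht.memLp_cellAverage u 2).sub hw).aestronglyMeasurable one_le_two).trans ?_
  gcongr
  exact ht.eLpNorm_cellAverage_le (hv.sub hu)

-- Averaging contracts `L²` and is uniformly close to the identity on continuous functions, which
-- are dense.
lemma tendsto_eLpNorm_cellAverage_sub_self (ht : ∀ i, IsPartition T (N i) (t i))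
    (hmesh : Tendsto (fun i ↦ mesh (N i) (t i)) l (𝓝 0)) {u : ℝ → E}
    (hu : MemLp u 2 (volume.restrict (Ioc 0 T))) :
    Tendsto (fun i ↦ eLpNorm (cellAverage (t i) u - u) 2 (volume.restrict (Ioc 0 T))) l (𝓝 0) := by
  refine ENNReal.tendsto_nhds_zero.2 fun ε hε ↦ ?_
  have hε3 : ε / 3 ≠ 0 := (ENNReal.div_pos hε.ne' ENNReal.ofNat_ne_top).ne'
  obtain ⟨g, hug, hg⟩ := hu.exists_boundedContinuous_eLpNorm_sub_le ENNReal.ofNat_ne_top hε3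
  have hAg := tendsto_eLpNorm_sub_of_tendstoUniformlyOn (μ := volume) measurableSet_Ioc
    measure_Ioc_lt_top.ne 2 (tendstoUniformlyOn_cellAverage ht hmesh g.continuous.continuousOn)
  filter_upwards [ENNReal.tendsto_nhds_zero.1 hAg (ε / 3) hε3.bot_lt] with i hi
  have htriangle : eLpNorm (cellAverage (t i) g - u) 2 (volume.restrict (Ioc 0 T)) ≤
      ε / 3 + ε / 3 := by
    rw [← sub_add_sub_cancel _ (g : ℝ → E) u]
    refine (eLpNorm_add_le (((ht i).memLp_cellAverage _ 2).sub hg).aestronglyMeasurable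
      (hg.sub hu).aestronglyMeasurable one_le_two).trans (add_le_add hi ?_)
    rwa [eLpNorm_sub_comm]
  calc eLpNorm (cellAverage (t i) u - u) 2 (volume.restrict (Ioc 0 T))
      ≤ ε / 3 + (ε / 3 + ε / 3) :=
        ((ht i).eLpNorm_cellAverage_sub_le hg hu hu).trans (add_le_add hug htriangle)
    _ = ε := by rw [← add_assoc, ENNReal.add_thirds]

lemma tendsto_eLpNorm_cellAverage_sub (ht : ∀ i, IsPartition T (N i) (t i))
    (hmesh : Tendsto (fun i ↦ mesh (N i) (t i)) l (𝓝 0)) {v : ι → ℝ → E} {u : ℝ → E}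
    (hv : ∀ i, MemLp (v i) 2 (volume.restrict (Ioc 0 T)))
    (hu : MemLp u 2 (volume.restrict (Ioc 0 T)))
    (hvu : Tendsto (fun i ↦ eLpNorm (v i - u) 2 (volume.restrict (Ioc 0 T))) l (𝓝 0)) :
    Tendsto (fun i ↦ eLpNorm (cellAverage (t i) (v i) - u) 2 (volume.restrict (Ioc 0 T))) l
      (𝓝 0) := by
  refine tendsto_of_tendsto_of_tendsto_of_le_of_le tendsto_const_nhds
    (by simpa only [add_zero] using hvu.add (tendsto_eLpNorm_cellAverage_sub_self ht hmesh hu))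
    (fun _ ↦ zero_le) fun i ↦ (ht i).eLpNorm_cellAverage_sub_le hu (hv i) hu

end CellAverage

/-! ### Paths in `W²` -/

lemma integral_norm_le_eLpNorm_two_mul_sqrt {α E : Type*} [MeasurableSpace α] {μ : Measure α}
    [IsFiniteMeasure μ] [NormedAddCommGroup E] {u : α → E} (hu : MemLp u 2 μ) :
    ∫ a, ‖u a‖ ∂μ ≤ (eLpNorm u 2 μ).toReal * √(μ.real univ) := by
  have hle := eLpNorm_le_eLpNorm_mul_rpow_measure_univ one_le_two hu.aestronglyMeasurable
  rw [eLpNorm_one_eq_lintegral_enorm] at hle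
  norm_num at hle
  rw [integral_norm_eq_lintegral_enorm hu.aestronglyMeasurable, Real.sqrt_eq_rpow, Measure.real,
    ENNReal.toReal_rpow, ← ENNReal.toReal_mul]
  exact ENNReal.toReal_mono
    (ENNReal.mul_ne_top hu.eLpNorm_ne_top (by finiteness)) hle

lemma norm_zero_sub_zero_le_W2dist {n : ℕ} {T : ℝ} (x x' y y' : ℝ → Eu n) :
    ‖x 0 - y 0‖ ≤ W2dist T x x' y y' :=
  Real.le_sqrt_of_sq_le (le_add_of_nonneg_right (integral_nonneg fun _ ↦ sq_nonneg _))

namespace IsW2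

variable {n : ℕ} {T : ℝ} {x x' y y' : ℝ → Eu n}

lemma integrableOn_Ioc (hx : IsW2 T x x') : IntegrableOn x' (Ioc 0 T) :=
  hx.1.mono_set Ioc_subset_Icc_self

lemma memLp (hx : IsW2 T x x') : MemLp x' 2 (volume.restrict (Ioc 0 T)) :=
  (memLp_two_iff_integrable_sq_norm hx.integrableOn_Ioc.aestronglyMeasurable).2
    (hx.2.1.mono_set Ioc_subset_Icc_self)

lemma continuousOn (hx : IsW2 T x x') : ContinuousOn x (Icc 0 T) :=
  (continuousOn_const.add (intervalIntegral.continuousOn_primitive hx.1)).congr hx.2.2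

lemma differenceQuotient_eq_average (hx : IsW2 T x x') {a b : ℝ} (ha : 0 ≤ a) (hab : a ≤ b)
    (hb : b ≤ T) : (b - a)⁻¹ • (x b - x a) = ⨍ r in Ioc a b, x' r := by
  have hsplit : ∫ r in Ioc 0 b, x' r = (∫ r in Ioc 0 a, x' r) + ∫ r in Ioc a b, x' r := by
    rw [← Ioc_union_Ioc_eq_Ioc ha hab]
    exact setIntegral_union (Ioc_disjoint_Ioc_of_le le_rfl) measurableSet_Ioc
      (hx.integrableOn_Ioc.mono_set (Ioc_subset_Ioc_right (hab.trans hb)))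
      (hx.integrableOn_Ioc.mono_set (Ioc_subset_Ioc ha hb))
  rw [setAverage_eq, Real.volume_real_Ioc_of_le hab, hx.2.2 b ⟨ha.trans hab, hb⟩,
    hx.2.2 a ⟨ha, hab.trans hb⟩, hsplit]
  congr 1
  abel

lemma W2dist_eq (hx : IsW2 T x x') (hy : IsW2 T y y') :
    W2dist T x x' y y' =
      √(‖x 0 - y 0‖ ^ 2 + (eLpNorm (x' - y') 2 (volume.restrict (Ioc 0 T))).toReal ^ 2) := by
  rw [W2dist, ← integral_norm_sq_eq_eLpNorm (hx.memLp.sub hy.memLp)]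
  rfl

lemma toReal_eLpNorm_sub_le_W2dist (hx : IsW2 T x x') (hy : IsW2 T y y') :
    (eLpNorm (x' - y') 2 (volume.restrict (Ioc 0 T))).toReal ≤ W2dist T x x' y y' := by
  rw [hx.W2dist_eq hy]
  exact Real.le_sqrt_of_sq_le (le_add_of_nonneg_left (sq_nonneg _))

lemma norm_sub_le (hx : IsW2 T x x') (hy : IsW2 T y y') {s : ℝ} (hs : s ∈ Icc 0 T) :
    ‖x s - y s‖ ≤ (1 + √T) * W2dist T x x' y y' := by
  have hdiff := hx.memLp.sub hy.memLp
  have hle : Ioc 0 s ⊆ Ioc 0 T := Ioc_subset_Ioc_right hs.2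
  have hsub : x s - y s = (x 0 - y 0) + ∫ r in Ioc 0 s, (x' - y') r := by
    rw [hx.2.2 s hs, hy.2.2 s hs, Pi.sub_def,
      integral_sub (hx.integrableOn_Ioc.mono_set hle) (hy.integrableOn_Ioc.mono_set hle)]
    abel
  have hint : ∫ r in Ioc 0 s, ‖(x' - y') r‖ ≤ W2dist T x x' y y' * √T := calc
    ∫ r in Ioc 0 s, ‖(x' - y') r‖ ≤ ∫ r in Ioc 0 T, ‖(x' - y') r‖ :=
      setIntegral_mono_set (hdiff.integrable one_le_two).norm
        (.of_forall fun _ ↦ norm_nonneg _) hle.eventuallyLE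
    _ ≤ (eLpNorm (x' - y') 2 (volume.restrict (Ioc 0 T))).toReal * √T := by
      simpa [Real.volume_real_Ioc_of_le (hs.1.trans hs.2)]
        using integral_norm_le_eLpNorm_two_mul_sqrt hdiff
    _ ≤ W2dist T x x' y y' * √T := by
      gcongr
      exact hx.toReal_eLpNorm_sub_le_W2dist hy
  calc ‖x s - y s‖ ≤ ‖x 0 - y 0‖ + ∫ r in Ioc 0 s, ‖(x' - y') r‖ := by
        rw [hsub]
        exact (norm_add_le _ _).trans (by gcongr; exact norm_integral_le_integral_norm _)
    _ ≤ W2dist T x x' y y' + W2dist T x x' y y' * √T := by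
        gcongr
        exact norm_zero_sub_zero_le_W2dist x x' y y'
    _ = (1 + √T) * W2dist T x x' y y' := by ring

variable {ι : Type*} {l : Filter ι} {X X' : ι → ℝ → Eu n}

lemma tendstoUniformlyOn (hX : ∀ i, IsW2 T (X i) (X' i)) (hx : IsW2 T x x')
    (h : Tendsto (fun i ↦ W2dist T (X i) (X' i) x x') l (𝓝 0)) :
    TendstoUniformlyOn X x l (Icc 0 T) := by
  have hbound := h.const_mul (1 + √T)
  rw [mul_zero] at hbound
  refine Metric.tendstoUniformlyOn_iff.2 fun ε hε ↦ ?_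
  filter_upwards [hbound.eventually_lt_const hε] with i hi s hs
  rw [dist_comm, dist_eq_norm]
  exact ((hX i).norm_sub_le hx hs).trans_lt hi

lemma tendsto_eLpNorm_deriv_sub (hX : ∀ i, IsW2 T (X i) (X' i)) (hx : IsW2 T x x')
    (h : Tendsto (fun i ↦ W2dist T (X i) (X' i) x x') l (𝓝 0)) :
    Tendsto (fun i ↦ eLpNorm (X' i - x') 2 (volume.restrict (Ioc 0 T))) l (𝓝 0) := by
  refine (ENNReal.tendsto_toReal_iff
    (fun i ↦ ((hX i).memLp.sub hx.memLp).eLpNorm_ne_top) ENNReal.zero_ne_top).1 ?_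
  exact squeeze_zero (fun _ ↦ ENNReal.toReal_nonneg)
    (fun i ↦ (hX i).toReal_eLpNorm_sub_le_W2dist hx) h

end IsW2

section Recovery

variable {n : ℕ} {T : ℝ}

lemma IsPartition.isW2_primitive_comp_cellIndex {N : ℕ} {t : ℕ → ℝ} (ht : IsPartition T N t)
    (a : Eu n) (c : ℕ → Eu n) :
    IsW2 T (fun s ↦ a + ∫ r in Ioc 0 s, c (cellIndex t r)) fun s ↦ c (cellIndex t s) := by
  refine ⟨(integrableOn_Icc_iff_integrableOn_Ioc enorm_ne_top).2 (ht.integrableOn_comp_cellIndex c),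
    (integrableOn_Icc_iff_integrableOn_Ioc enorm_ne_top).2
      (ht.integrableOn_comp_cellIndex fun k ↦ ‖c k‖ ^ 2),
    fun s _ ↦ ?_⟩
  simp

lemma IsPartition.isPL_primitive_comp_cellIndex {N : ℕ} {t : ℕ → ℝ} (ht : IsPartition T N t)
    (a : Eu n) (c : ℕ → Eu n) :
    IsPL T N t fun s ↦ a + ∫ r in Ioc 0 s, c (cellIndex t r) := by
  refine ⟨(ht.isW2_primitive_comp_cellIndex a c).continuousOn, fun k hk ↦
    ⟨a + (∫ r in Ioc 0 (t k), c (cellIndex t r)) - t k • c k, c k, fun s hs ↦ ?_⟩⟩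
  simp only [ht.primitive_comp_cellIndex c hk hs, sub_smul]
  abel

-- The recovery sequence integrates the cell averages of `x'`; it interpolates `x` at the nodes.
lemma exists_isPL_tendsto_W2dist {ι : Type*} {l : Filter ι} {N : ι → ℕ} {t : ι → ℕ → ℝ}
    (ht : ∀ i, IsPartition T (N i) (t i))
    (hmesh : Tendsto (fun i ↦ mesh (N i) (t i)) l (𝓝 0)) {x x' : ℝ → Eu n} (hx : IsW2 T x x') :
    ∃ X X' : ι → ℝ → Eu n, (∀ i, IsPL T (N i) (t i) (X i)) ∧ (∀ i, IsW2 T (X i) (X' i)) ∧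
      Tendsto (fun i ↦ W2dist T (X i) (X' i) x x') l (𝓝 0) := by
  have hW2 (i : ι) : IsW2 T (fun s ↦ x 0 + ∫ r in Ioc 0 s, cellAverage (t i) x' r)
      (cellAverage (t i) x') :=
    (ht i).isW2_primitive_comp_cellIndex (x 0) fun k ↦ ⨍ r in Ioc (t i k) (t i (k + 1)), x' r
  refine ⟨_, _, fun i ↦ (ht i).isPL_primitive_comp_cellIndex (x 0)
    fun k ↦ ⨍ r in Ioc (t i k) (t i (k + 1)), x' r, hW2, ?_⟩
  have hdist (i : ι) : W2dist T (fun s ↦ x 0 + ∫ r in Ioc 0 s, cellAverage (t i) x' r)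
      (cellAverage (t i) x') x x' =
      (eLpNorm (cellAverage (t i) x' - x') 2 (volume.restrict (Ioc 0 T))).toReal := by
    rw [(hW2 i).W2dist_eq hx]
    simp
  have hL2 := tendsto_eLpNorm_cellAverage_sub_self ht hmesh hx.memLp
  exact ((ENNReal.tendsto_toReal ENNReal.zero_ne_top).comp hL2).congr fun i ↦ (hdist i).symm

end Recovery

/-! ### Trapezoidal means and the clean state -/

section TrapMean

variable {ι E : Type*} [NormedAddCommGroup E] [NormedSpace ℝ E] {T : ℝ}

/-- The function that on each cell of the partition is the mean of the two endpoint values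
of `V`. -/
noncomputable def trapMean (t : ℕ → ℝ) (V : ℝ → E) (s : ℝ) : E :=
  (1 / 2 : ℝ) • (V (leftNode t s) + V (rightNode t s))

lemma IsPartition.memLp_trapMean {N : ℕ} {t : ℕ → ℝ} (ht : IsPartition T N t) (V : ℝ → E)
    (p : ENNReal) : MemLp (trapMean t V) p (volume.restrict (Ioc 0 T)) :=
  ht.memLp_comp_cellIndex (fun k ↦ (1 / 2 : ℝ) • (V (t k) + V (t (k + 1)))) p

lemma IsPartition.integrableOn_trapMean {N : ℕ} {t : ℕ → ℝ} (ht : IsPartition T N t)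
    (V : ℝ → E) : IntegrableOn (trapMean t V) (Ioc 0 T) :=
  (ht.memLp_trapMean V 1).integrable le_rfl

lemma IsPartition.norm_trapMean_sub_le {N : ℕ} {t : ℕ → ℝ} (ht : IsPartition T N t)
    {V W : ℝ → E} {d : ℝ → ℝ} (hd : ∀ s ∈ Icc 0 T, ‖V s - W s‖ ≤ d s) {s : ℝ} (hs : s ∈ Ioc 0 T) :
    ‖trapMean t V s - trapMean t W s‖ ≤ trapMean t d s := by
  rw [trapMean, trapMean, ← smul_sub, add_sub_add_comm, norm_smul, trapMean, smul_eq_mul,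
    Real.norm_of_nonneg one_half_pos.le]
  gcongr
  exact norm_add_le_of_le (hd _ (ht.leftNode_mem_Icc hs)) (hd _ (ht.rightNode_mem_Icc hs))

lemma tendstoUniformlyOn_trapMean {l : Filter ι} {N : ι → ℕ} {t : ι → ℕ → ℝ}
    (ht : ∀ i, IsPartition T (N i) (t i))
    (hmesh : Tendsto (fun i ↦ mesh (N i) (t i)) l (𝓝 0)) {V : ι → ℝ → E} {V₀ : ℝ → E}
    (hV₀ : ContinuousOn V₀ (Icc 0 T)) (hV : TendstoUniformlyOn V V₀ l (Icc 0 T)) :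
    TendstoUniformlyOn (fun i ↦ trapMean (t i) (V i)) V₀ l (Ioc 0 T) := by
  have hsum := (tendstoUniformlyOn_comp_leftNode ht hmesh hV₀ hV).add
    (tendstoUniformlyOn_comp_rightNode ht hmesh hV₀ hV)
  refine ((uniformContinuous_const_smul (1 / 2 : ℝ)).comp_tendstoUniformlyOn hsum).congr_right
    fun s _ ↦ ?_
  simp only [Function.comp_apply, Pi.add_apply, ← two_smul ℝ (V₀ s), smul_smul]
  norm_num

end TrapMean

lemma setIntegral_mul_exp (c : ℝ) {s : ℝ} (hs : 0 ≤ s) :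
    ∫ r in Ioc 0 s, c * Real.exp (c * r) = Real.exp (c * s) - 1 := by
  have hderiv (r : ℝ) : HasDerivAt (fun r ↦ Real.exp (c * r)) (c * Real.exp (c * r)) r := by
    simpa only [id, mul_one, mul_comm] using ((hasDerivAt_id r).const_mul c).exp
  rw [← intervalIntegral.integral_of_le hs, intervalIntegral.integral_eq_sub_of_hasDerivAt
    (fun r _ ↦ hderiv r) (Continuous.intervalIntegrable (by fun_prop) _ _)]
  simp

section Gronwall

variable {T : ℝ} {N : ℕ} {t : ℕ → ℝ} {L M : ℝ} {e : ℝ → ℝ}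

lemma IsPartition.trapMean_le_of_le_exp (ht : IsPartition T N t) (hL : 0 ≤ L)
    (hmesh : Real.exp (L * mesh N t) ≤ 2) (hM : 0 ≤ M)
    (he : ∀ s ∈ Icc 0 T, e s ≤ M * Real.exp (L * s)) {s : ℝ} (hs : s ∈ Ioc 0 T) :
    trapMean t e s ≤ 2 * M * Real.exp (L * s) := by
  have hcell := ht.mem_cell hs
  have hleft : M * Real.exp (L * leftNode t s) ≤ M * Real.exp (L * rightNode t s) := by
    gcongr
    exact hcell.1.le.trans hcell.2
  have hright : M * Real.exp (L * rightNode t s) ≤ 2 * M * Real.exp (L * s) := calc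
    M * Real.exp (L * rightNode t s) ≤ M * Real.exp (L * (mesh N t + s)) := by
      gcongr
      linarith [ht.rightNode_sub_leftNode_le hs, hcell.1]
    _ ≤ M * (2 * Real.exp (L * s)) := by rw [mul_add, Real.exp_add]; gcongr
    _ = 2 * M * Real.exp (L * s) := by ring
  rw [trapMean, smul_eq_mul]
  linarith [he _ (ht.leftNode_mem_Icc hs), he _ (ht.rightNode_mem_Icc hs)]

lemma IsPartition.setIntegral_trapMean_le_of_le_exp (ht : IsPartition T N t) (hL : 0 ≤ L)
    (hmesh : Real.exp (4 * L * mesh N t) ≤ 2) (hM : 0 ≤ M)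
    (he : ∀ s ∈ Icc 0 T, e s ≤ M * Real.exp (4 * L * s)) {s : ℝ} (hs : s ∈ Icc 0 T) :
    ∫ r in Ioc 0 s, L * trapMean t e r ≤ M / 2 * Real.exp (4 * L * s) := by
  have hsub : Ioc 0 s ⊆ Ioc 0 T := Ioc_subset_Ioc_right hs.2
  calc ∫ r in Ioc 0 s, L * trapMean t e r
      ≤ ∫ r in Ioc 0 s, M / 2 * (4 * L * Real.exp (4 * L * r)) := by
        refine setIntegral_mono_on (((ht.integrableOn_trapMean e).mono_set hsub).const_mul L)
          (Continuous.integrableOn_Ioc (by fun_prop)) measurableSet_Ioc fun r hr ↦ ?_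
        have hmean := ht.trapMean_le_of_le_exp (by positivity) hmesh hM he (hsub hr)
        linarith [mul_le_mul_of_nonneg_left hmean hL]
    _ = M / 2 * (Real.exp (4 * L * s) - 1) := by
        rw [integral_const_mul, setIntegral_mul_exp _ hs.1]
    _ ≤ M / 2 * Real.exp (4 * L * s) := by gcongr; linarith

-- The means look ahead to the right endpoint of the cell, so the classical Gronwall lemma does not
-- apply; instead compare `e` with `M * exp (4 * L * s)` for the smallest admissible `M`.
lemma IsPartition.le_exp_of_le_integral_trapMean (ht : IsPartition T N t) (hL : 0 ≤ L)
    (hmesh : Real.exp (4 * L * mesh N t) ≤ 2) (hecont : ContinuousOn e (Icc 0 T))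
    (he₀ : ∀ s ∈ Icc 0 T, 0 ≤ e s) {a : ℝ}
    (hint : ∀ s ∈ Icc 0 T, e s ≤ a + ∫ r in Ioc 0 s, L * trapMean t e r)
    {s : ℝ} (hs : s ∈ Icc 0 T) : e s ≤ 2 * a * Real.exp (4 * L * s) := by
  obtain ⟨s₀, hs₀, hmax⟩ := isCompact_Icc.exists_isMaxOn (nonempty_Icc.2 ht.length_nonneg)
    (hecont.div (by fun_prop : ContinuousOn (fun s ↦ Real.exp (4 * L * s)) (Icc 0 T))
      fun _ _ ↦ Real.exp_ne_zero _)
  set M := e s₀ / Real.exp (4 * L * s₀)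
  have hM : 0 ≤ M := div_nonneg (he₀ s₀ hs₀) (Real.exp_pos _).le
  have he_le : ∀ r ∈ Icc 0 T, e r ≤ M * Real.exp (4 * L * r) := fun r hr ↦
    (div_le_iff₀ (Real.exp_pos _)).1 (hmax hr)
  have he_eq : e s₀ = M * Real.exp (4 * L * s₀) := (div_mul_cancel₀ _ (Real.exp_ne_zero _)).symm
  have hM_le : M ≤ 2 * a := calc
    M ≤ M * Real.exp (4 * L * s₀) :=
      le_mul_of_one_le_right hM (Real.one_le_exp (mul_nonneg (by positivity) hs₀.1))
    _ ≤ 2 * a := by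
      linarith [hint s₀ hs₀, ht.setIntegral_trapMean_le_of_le_exp hL hmesh hM he_le hs₀]
  exact (he_le s hs).trans (by gcongr)

end Gronwall

section CleanState

lemma tendstoUniformlyOn_prodMk {ι α X Y : Type*} {l : Filter ι} [UniformSpace X] [UniformSpace Y]
    {u : ι → α → X} {u₀ : α → X} {v : ι → α → Y} {v₀ : α → Y} {s : Set α}
    (hu : TendstoUniformlyOn u u₀ l s) (hv : TendstoUniformlyOn v v₀ l s) :
    TendstoUniformlyOn (fun i a ↦ (u i a, v i a)) (fun a ↦ (u₀ a, v₀ a)) l s := fun V hV ↦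
  tendsto_diag.eventually (hu.prodMk hv V hV)

lemma tendstoUniformlyOn_comp_path {ι X Y Z W : Type*} {l : Filter ι} [UniformSpace X]
    [UniformSpace Y] [UniformSpace Z] [UniformSpace W] {F : ℝ → X → Y → Z → W}
    (hF : Continuous fun p : ℝ × X × Y × Z ↦ F p.1 p.2.1 p.2.2.1 p.2.2.2) {K : Set ℝ}
    (hK : IsCompact K) {x : ι → ℝ → X} {x₀ : ℝ → X} {z : ι → ℝ → Y} {z₀ : ℝ → Y} {θ : ι → Z}
    {θ₀ : Z} (hx₀ : ContinuousOn x₀ K) (hz₀ : ContinuousOn z₀ K)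
    (hx : TendstoUniformlyOn x x₀ l K) (hz : TendstoUniformlyOn z z₀ l K)
    (hθ : Tendsto θ l (𝓝 θ₀)) :
    TendstoUniformlyOn (fun i s ↦ F s (x i s) (z i s) (θ i)) (fun s ↦ F s (x₀ s) (z₀ s) θ₀)
      l K := by
  have hid : TendstoUniformlyOn (fun _ s ↦ s) (fun s : ℝ ↦ s) l K := fun V hV ↦
    .of_forall fun _ s _ ↦ refl_mem_uniformity hV
  exact tendstoUniformlyOn_comp_of_continuous hF hK
    (continuousOn_id.prodMk (hx₀.prodMk (hz₀.prodMk continuousOn_const)))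
    (tendstoUniformlyOn_prodMk hid (tendstoUniformlyOn_prodMk hx
      (tendstoUniformlyOn_prodMk hz (hθ.tendstoUniformlyOn_const K))))

lemma continuousOn_comp_path {X Y Z W : Type*} [TopologicalSpace X] [TopologicalSpace Y]
    [TopologicalSpace Z] [TopologicalSpace W] {F : ℝ → X → Y → Z → W}
    (hF : Continuous fun p : ℝ × X × Y × Z ↦ F p.1 p.2.1 p.2.2.1 p.2.2.2) {K : Set ℝ} {x : ℝ → X}
    {z : ℝ → Y} (hx : ContinuousOn x K) (hz : ContinuousOn z K) (θ : Z) :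
    ContinuousOn (fun s ↦ F s (x s) (z s) θ) K :=
  hF.comp_continuousOn (continuousOn_id.prodMk (hx.prodMk (hz.prodMk continuousOn_const)))

variable {n q m : ℕ} {T : ℝ} {h : ℝ → Eu n → Eu q → Eu m → Eu q}

lemma IsTrapPath.eq_add_setIntegral {N : ℕ} {t : ℕ → ℝ} (ht : IsPartition T N t) {x : ℝ → Eu n}
    {ζ : Eu q} {ϑ : Eu m} {z : ℝ → Eu q} (hz : IsTrapPath N t h x ζ ϑ z) {s : ℝ}
    (hs : s ∈ Icc 0 T) :
    z s = ζ + ∫ r in Ioc 0 s, trapMean t (fun r ↦ h r (x r) (z r) ϑ) r := by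
  rw [← hz.1]
  refine ht.eq_add_primitive_comp_cellIndex (c := fun k ↦ (1 / 2 : ℝ) •
    (h (t k) (x (t k)) (z (t k)) ϑ + h (t (k + 1)) (x (t (k + 1))) (z (t (k + 1))) ϑ))
    (fun k hk s hs ↦ ?_) hs
  rw [hz.2 k hk s hs, smul_smul, mul_one_div]

lemma IsTrapPath.continuousOn {N : ℕ} {t : ℕ → ℝ} (ht : IsPartition T N t) {x : ℝ → Eu n}
    {ζ : Eu q} {ϑ : Eu m} {z : ℝ → Eu q} (hz : IsTrapPath N t h x ζ ϑ z) :
    ContinuousOn z (Icc 0 T) :=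
  (continuousOn_const.add (intervalIntegral.continuousOn_primitive
    ((integrableOn_Icc_iff_integrableOn_Ioc enorm_ne_top).2 (ht.integrableOn_trapMean _)))).congr
    fun _ hs ↦ hz.eq_add_setIntegral ht hs

lemma IsTrapPath.norm_sub_le {N : ℕ} {t : ℕ → ℝ} (ht : IsPartition T N t) {x : ℝ → Eu n}
    {ζ z₀ : Eu q} {ϑ : Eu m} {zh z g : ℝ → Eu q} (hzh : IsTrapPath N t h x ζ ϑ zh) {L : ℝ}
    (hL : 0 ≤ L) (hmesh : Real.exp (4 * L * mesh N t) ≤ 2)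
    (hLip : ∀ s ∈ Icc 0 T, ∀ a b b', ‖h s a b ϑ - h s a b' ϑ‖ ≤ L * ‖b - b'‖)
    (hz : ContinuousOn z (Icc 0 T)) (hg : IntegrableOn g (Ioc 0 T))
    (hzg : ∀ s ∈ Icc 0 T, z s = z₀ + ∫ r in Ioc 0 s, g r) {η : ℝ} (hη₀ : 0 ≤ η)
    (hη : ∀ s ∈ Ioc 0 T, ‖trapMean t (fun r ↦ h r (x r) (z r) ϑ) s - g s‖ ≤ η)
    {s : ℝ} (hs : s ∈ Icc 0 T) :
    ‖zh s - z s‖ ≤ 2 * (‖ζ - z₀‖ + η * T) * Real.exp (4 * L * s) := by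
  set e : ℝ → ℝ := fun s ↦ ‖zh s - z s‖
  have hpointwise : ∀ r ∈ Ioc 0 T,
      ‖trapMean t (fun r ↦ h r (x r) (zh r) ϑ) r - g r‖ ≤ L * trapMean t e r + η := fun r hr ↦ by
    have hmean := ht.norm_trapMean_sub_le (fun s hs ↦ hLip s hs (x s) (zh s) (z s)) hr
    have hscale : trapMean t (fun s ↦ L * ‖zh s - z s‖) r = L * trapMean t e r := by
      simp only [trapMean, smul_eq_mul, e]
      ring
    rw [hscale] at hmean
    exact (norm_sub_le_norm_sub_add_norm_sub _ _ _).trans (add_le_add hmean (hη r hr))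
  refine ht.le_exp_of_le_integral_trapMean hL hmesh ((hzh.continuousOn ht).sub hz).norm
    (fun _ _ ↦ norm_nonneg _) (fun s hs ↦ ?_) hs
  have hsub : Ioc 0 s ⊆ Ioc 0 T := Ioc_subset_Ioc_right hs.2
  have hmean := ((ht.integrableOn_trapMean e).mono_set hsub).const_mul L
  have hsplit : zh s - z s = (ζ - z₀) +
      ∫ r in Ioc 0 s, (trapMean t (fun r ↦ h r (x r) (zh r) ϑ) r - g r) := by
    rw [hzh.eq_add_setIntegral ht hs, hzg s hs,
      integral_sub ((ht.integrableOn_trapMean _).mono_set hsub) (hg.mono_set hsub)]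
    abel
  have hconst : IntegrableOn (fun _ ↦ η) (Ioc 0 s) := integrableOn_const (by simp)
  calc e s ≤ ‖ζ - z₀‖ + ∫ r in Ioc 0 s, (L * trapMean t e r + η) := by
        refine (congrArg norm hsplit).trans_le (norm_add_le_of_le le_rfl
          (norm_integral_le_of_norm_le (hmean.add hconst) ?_))
        exact ae_restrict_of_forall_mem measurableSet_Ioc fun r hr ↦ hpointwise r (hsub hr)
    _ = ‖ζ - z₀‖ + η * s + ∫ r in Ioc 0 s, L * trapMean t e r := by
        rw [integral_add hmean hconst, setIntegral_const, Real.volume_real_Ioc_of_le hs.1]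
        simp only [sub_zero, smul_eq_mul]
        ring
    _ ≤ ‖ζ - z₀‖ + η * T + ∫ r in Ioc 0 s, L * trapMean t e r := by
        gcongr
        exact hs.2

end CleanState

section CleanStateConvergence

variable {ι : Type*} {l : Filter ι} {n q m : ℕ} {T : ℝ} {h : ℝ → Eu n → Eu q → Eu m → Eu q}

lemma tendstoUniformlyOn_trapPath {N : ι → ℕ} {t : ι → ℕ → ℝ}
    (ht : ∀ i, IsPartition T (N i) (t i)) (hmesh : Tendsto (fun i ↦ mesh (N i) (t i)) l (𝓝 0))
    (hh : Continuous fun p : ℝ × Eu n × Eu q × Eu m ↦ h p.1 p.2.1 p.2.2.1 p.2.2.2)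
    {x : ι → ℝ → Eu n} {x₀ : ℝ → Eu n} {ζ : ι → Eu q} {z₀ : Eu q} {ϑ : ι → Eu m} {θ : Eu m}
    {zh : ι → ℝ → Eu q} {z : ℝ → Eu q} {L : ℝ} (hL : 0 ≤ L)
    (hLip : ∀ᶠ i in l, ∀ s ∈ Icc 0 T, ∀ a b b', ‖h s a b (ϑ i) - h s a b' (ϑ i)‖ ≤ L * ‖b - b'‖)
    (hzh : ∀ᶠ i in l, IsTrapPath (N i) (t i) h (x i) (ζ i) (ϑ i) (zh i))
    (hx₀ : ContinuousOn x₀ (Icc 0 T)) (hz : ContinuousOn z (Icc 0 T))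
    (hode : ∀ s ∈ Icc 0 T, z s = z₀ + ∫ r in Ioc 0 s, h r (x₀ r) (z r) θ)
    (hx : TendstoUniformlyOn x x₀ l (Icc 0 T)) (hζ : Tendsto ζ l (𝓝 z₀))
    (hϑ : Tendsto ϑ l (𝓝 θ)) : TendstoUniformlyOn zh z l (Icc 0 T) := by
  have hg : ContinuousOn (fun s ↦ h s (x₀ s) (z s) θ) (Icc 0 T) :=
    continuousOn_comp_path hh hx₀ hz θ
  have hconst : TendstoUniformlyOn (fun _ ↦ z) z l (Icc 0 T) := fun V hV ↦
    .of_forall fun _ s _ ↦ refl_mem_uniformity hV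
  have hmean := tendstoUniformlyOn_trapMean ht hmesh hg
    (tendstoUniformlyOn_comp_path hh isCompact_Icc hx₀ hz hx hconst hϑ)
  have hexp : ∀ᶠ i in l, Real.exp (4 * L * mesh (N i) (t i)) ≤ 2 := by
    have hlim := (Real.continuous_exp.tendsto _).comp (hmesh.const_mul (4 * L))
    rw [mul_zero, Real.exp_zero] at hlim
    exact hlim.eventually_le_const one_lt_two
  rw [Metric.tendstoUniformlyOn_iff] at hmean ⊢
  intro ε hε
  set C := 2 * (1 + |T|) * Real.exp (4 * L * |T|) with hC
  have hCpos : 0 < C := by positivity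
  filter_upwards [hexp, hLip, hzh, hmean (ε / (2 * C)) (by positivity),
    Metric.tendsto_nhds.1 hζ (ε / (2 * C)) (by positivity)] with i hexp hLip hzh hmean hζ s hs
  rw [dist_comm, dist_eq_norm]
  calc ‖zh i s - z s‖
      ≤ 2 * (‖ζ i - z₀‖ + ε / (2 * C) * T) * Real.exp (4 * L * s) :=
        hzh.norm_sub_le (ht i) hL hexp hLip hz (hg.integrableOn_Icc.mono_set Ioc_subset_Icc_self)
          hode (by positivity) (fun r hr ↦ by rw [← dist_eq_norm, dist_comm]; exact (hmean r hr).le)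
          hs
    _ ≤ 2 * (ε / (2 * C) + ε / (2 * C) * |T|) * Real.exp (4 * L * |T|) := by
        gcongr
        · exact (dist_eq_norm (ζ i) z₀).symm.trans_le hζ.le
        · exact le_abs_self T
        · exact hs.2.trans (le_abs_self T)
    _ = C * (ε / (2 * C)) := by rw [hC]; ring
    _ < ε := by field_simp; norm_num

end CleanStateConvergence

/-! ### The log-determinant correction -/

section Det

variable {𝕜 E : Type*} [NontriviallyNormedField 𝕜] [CompleteSpace 𝕜] [NormedAddCommGroup E]
  [NormedSpace 𝕜 E] [FiniteDimensional 𝕜 E]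

/-- The trace of continuous endomorphisms of a finite-dimensional space, as a continuous linear
form. -/
noncomputable def traceCLM (𝕜 E : Type*) [NontriviallyNormedField 𝕜] [CompleteSpace 𝕜]
    [NormedAddCommGroup E] [NormedSpace 𝕜 E] [FiniteDimensional 𝕜 E] : (E →L[𝕜] E) →L[𝕜] 𝕜 :=
  LinearMap.toContinuousLinearMap (LinearMap.trace 𝕜 E ∘ₗ ContinuousLinearMap.coeLM 𝕜)

lemma traceCLM_apply (A : E →L[𝕜] E) :
    traceCLM 𝕜 E A = LinearMap.trace 𝕜 E (A : E →ₗ[𝕜] E) := rfl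

lemma basis_det_update_self {ι R M : Type*} [Fintype ι] [DecidableEq ι] [CommRing R]
    [AddCommGroup M] [Module R M] (b : Module.Basis ι R M) (i : ι) (v : M) :
    b.det (Function.update b i v) = b.repr v i := by
  rw [b.det_apply, b.toMatrix_update, b.toMatrix_self, ← Matrix.cramer_apply, Matrix.cramer_one,
    Module.End.one_apply]

-- `det A` is the multilinear form `b.det` at the columns `A (b i)`, and replacing the `i`-th column
-- of the identity by that of `A` leaves the `i`-th diagonal entry of `A`.
lemma hasFDerivAt_det_one :
    HasFDerivAt (fun A : E →L[𝕜] E ↦ LinearMap.det (A : E →ₗ[𝕜] E)) (traceCLM 𝕜 E) 1 := by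
  let b := Module.finBasis 𝕜 E
  have hcont : Continuous b.det.toMultilinearMap := by
    refine Continuous.matrix_det (continuous_matrix fun i j ↦ ?_)
    exact (b.coord i).continuous_of_finiteDimensional.comp (continuous_apply j)
  let detForm : ContinuousMultilinearMap 𝕜 (fun _ : Fin (Module.finrank 𝕜 E) ↦ E) 𝕜 :=
    ⟨b.det.toMultilinearMap, hcont⟩
  let columns : (E →L[𝕜] E) →L[𝕜] (Fin (Module.finrank 𝕜 E) → E) :=
    ContinuousLinearMap.pi fun i ↦ ContinuousLinearMap.apply 𝕜 E (b i)
  have hdet (A : E →L[𝕜] E) : detForm (columns A) = LinearMap.det (A : E →ₗ[𝕜] E) :=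
    (b.det_comp (A : E →ₗ[𝕜] E) b).trans (by rw [b.det_self, mul_one])
  have hderiv : (detForm.linearDeriv b).comp columns = traceCLM 𝕜 E := by
    ext A
    have htrace : traceCLM 𝕜 E A = ∑ i, b.repr (A (b i)) i := by
      simp [traceCLM_apply, LinearMap.trace_eq_matrix_trace 𝕜 b, Matrix.trace,
        LinearMap.toMatrix_apply]
    rw [htrace, ContinuousLinearMap.comp_apply, ContinuousMultilinearMap.linearDeriv_apply]
    exact Finset.sum_congr rfl fun i _ ↦ basis_det_update_self b i (A (b i))
  have hcomp := (detForm.hasFDerivAt (columns 1)).comp 1 columns.hasFDerivAt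
  exact (hderiv ▸ hcomp).congr_of_eventuallyEq (.of_forall fun A ↦ (hdet A).symm)

end Det

lemma elog_of_pos {r : ℝ} (hr : 0 < r) : elog r = (Real.log r : EReal) :=
  if_neg hr.not_ge

lemma elog_ne_top (r : ℝ) : elog r ≠ ⊤ := by
  unfold elog
  split_ifs <;> simp

lemma continuous_elog : Continuous elog := by
  have helog : elog = fun r ↦ ENNReal.log (ENNReal.ofReal r) :=
    funext fun r ↦ (ENNReal.log_ofReal r).symm
  exact helog ▸ ENNReal.continuous_log.comp ENNReal.continuous_ofReal

lemma coe_sum_ereal {ι : Type*} (s : Finset ι) (u : ι → ℝ) :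
    ((∑ k ∈ s, u k : ℝ) : EReal) = ∑ k ∈ s, (u k : EReal) :=
  map_sum (⟨⟨Real.toEReal, EReal.coe_zero⟩, EReal.coe_add⟩ : ℝ →+ EReal) u s

section LogDet

variable {ι E : Type*} [NormedAddCommGroup E] [NormedSpace ℝ E] [FiniteDimensional ℝ E]

lemma eventually_abs_log_det_one_add_sub_trace_le {η : ℝ} (hη : 0 < η) :
    ∀ᶠ A : E →L[ℝ] E in 𝓝 0, 0 < LinearMap.det ((1 + A : E →L[ℝ] E) : E →ₗ[ℝ] E) ∧
      |Real.log (LinearMap.det ((1 + A : E →L[ℝ] E) : E →ₗ[ℝ] E)) - traceCLM ℝ E A| ≤ η * ‖A‖ := by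
  have hone : LinearMap.det ((1 : E →L[ℝ] E) : E →ₗ[ℝ] E) = 1 := LinearMap.det_id
  have hlog : HasFDerivAt (fun A : E →L[ℝ] E ↦ Real.log (LinearMap.det (A : E →ₗ[ℝ] E)))
      (traceCLM ℝ E) 1 := by
    simpa [hone] using (hasFDerivAt_det_one (𝕜 := ℝ) (E := E)).log (by simp)
  have hpos : ∀ᶠ A : E →L[ℝ] E in 𝓝 1, 0 < LinearMap.det (A : E →ₗ[ℝ] E) :=
    hasFDerivAt_det_one.continuousAt.eventually_const_lt (one_pos.trans_eq hone.symm)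
  have hshift : Tendsto (fun A : E →L[ℝ] E ↦ 1 + A) (𝓝 0) (𝓝 1) :=
    (continuous_const_add _).tendsto' _ _ (add_zero _)
  filter_upwards [hshift.eventually hpos, hshift.eventually (hlog.isLittleO.def hη)] with A hpos hA
  simp only [hone, Real.log_one, sub_zero, add_sub_cancel_left, Real.norm_eq_abs] at hA
  exact ⟨hpos, hA⟩

variable {T : ℝ} {l : Filter ι} {N : ι → ℕ} {t : ι → ℕ → ℝ} {D : ι → ℕ → E →L[ℝ] E} {C : ℝ}

lemma eventually_forall_det_pos_and_abs_log_det_add_le (ht : ∀ i, IsPartition T (N i) (t i))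
    (hmesh : Tendsto (fun i ↦ mesh (N i) (t i)) l (𝓝 0))
    (hD : ∀ᶠ i in l, ∀ k < N i, ‖D i k‖ ≤ C) {η : ℝ} (hη : 0 < η) :
    ∀ᶠ i in l, ∀ k < N i,
      0 < LinearMap.det ((1 - ((t i (k + 1) - t i k) / 2) • D i k : E →L[ℝ] E) : E →ₗ[ℝ] E) ∧
      |Real.log (LinearMap.det
          ((1 - ((t i (k + 1) - t i k) / 2) • D i k : E →L[ℝ] E) : E →ₗ[ℝ] E)) +
        1 / 2 * ((t i (k + 1) - t i k) * traceCLM ℝ E (D i k))| ≤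
      η * ((t i (k + 1) - t i k) * C) := by
  obtain ⟨r, hr, hlog⟩ :=
    Metric.eventually_nhds_iff_ball.1 (eventually_abs_log_det_one_add_sub_trace_le (E := E) hη)
  have hsmall : ∀ᶠ i in l, mesh (N i) (t i) * C < r :=
    (hmesh.mul_const C).eventually_lt_const (by simpa using hr)
  filter_upwards [hD, hsmall] with i hD hsmall k hk
  set δ := t i (k + 1) - t i k
  have hδ : 0 ≤ δ := sub_nonneg.2 ((ht i).lt_succ k hk).le
  have hC : 0 ≤ C := (norm_nonneg _).trans (hD k hk)
  have hδD : ‖-((δ / 2) • D i k)‖ ≤ δ * C := by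
    rw [norm_neg, norm_smul, Real.norm_of_nonneg (by positivity)]
    gcongr
    exacts [half_le_self hδ, hD k hk]
  have hball : -((δ / 2) • D i k) ∈ Metric.ball 0 r := mem_ball_zero_iff.2 <|
    (hδD.trans (mul_le_mul_of_nonneg_right (step_le_mesh hk) hC)).trans_lt hsmall
  obtain ⟨hpos, habs⟩ := hlog _ hball
  rw [← sub_eq_add_neg] at hpos habs
  refine ⟨hpos, le_trans (le_of_eq ?_) (habs.trans (by gcongr))⟩
  rw [map_neg, map_smul, smul_eq_mul, sub_neg_eq_add]
  ring_nf

lemma tendsto_sum_log_det_one_sub_add_trace (ht : ∀ i, IsPartition T (N i) (t i))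
    (hmesh : Tendsto (fun i ↦ mesh (N i) (t i)) l (𝓝 0))
    (hD : ∀ᶠ i in l, ∀ k < N i, ‖D i k‖ ≤ C) :
    Tendsto (fun i ↦ ∑ k ∈ Finset.range (N i), (Real.log (LinearMap.det
        ((1 - ((t i (k + 1) - t i k) / 2) • D i k : E →L[ℝ] E) : E →ₗ[ℝ] E)) +
      1 / 2 * ((t i (k + 1) - t i k) * traceCLM ℝ E (D i k)))) l (𝓝 0) := by
  rw [Metric.tendsto_nhds]
  intro ε hε
  obtain ⟨η, hη, hηε⟩ := exists_pos_mul_lt hε (T * C)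
  filter_upwards [eventually_forall_det_pos_and_abs_log_det_add_le ht hmesh hD hη] with i hi
  rw [dist_zero_right]
  calc _ ≤ ∑ k ∈ Finset.range (N i), η * ((t i (k + 1) - t i k) * C) :=
        norm_sum_le_of_le _ fun k hk ↦ (hi k (Finset.mem_range.1 hk)).2
    _ = T * C * η := by
        rw [← Finset.mul_sum, ← Finset.sum_mul, Finset.sum_range_sub, (ht i).zero, (ht i).last,
          sub_zero, mul_comm]
    _ < ε := hηε

lemma tendsto_sum_elog_det_one_sub (ht : ∀ i, IsPartition T (N i) (t i))
    (hmesh : Tendsto (fun i ↦ mesh (N i) (t i)) l (𝓝 0))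
    (hD : ∀ᶠ i in l, ∀ k < N i, ‖D i k‖ ≤ C) {a : ℝ}
    (htrace : Tendsto (fun i ↦ ∑ k ∈ Finset.range (N i),
      (t i (k + 1) - t i k) * traceCLM ℝ E (D i k)) l (𝓝 a)) :
    Tendsto (fun i ↦ ∑ k ∈ Finset.range (N i), elog (LinearMap.det
      ((1 - ((t i (k + 1) - t i k) / 2) • D i k : E →L[ℝ] E) : E →ₗ[ℝ] E))) l
      (𝓝 ((-(1 / 2 * a) : ℝ) : EReal)) := by
  have hlog := (tendsto_sum_log_det_one_sub_add_trace ht hmesh hD).sub (htrace.const_mul (1 / 2))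
  simp only [Finset.sum_add_distrib, ← Finset.mul_sum, add_sub_cancel_right, zero_sub] at hlog
  refine ((continuous_coe_real_ereal.tendsto _).comp hlog).congr' ?_
  filter_upwards [eventually_forall_det_pos_and_abs_log_det_add_le ht hmesh hD one_pos] with i hi
  rw [Function.comp_apply, coe_sum_ereal]
  exact Finset.sum_congr rfl fun k hk ↦ (elog_of_pos (hi k (Finset.mem_range.1 hk)).1).symm

lemma tendsto_sum_elog_det_one_sub_of_tendstoUniformlyOn (ht : ∀ i, IsPartition T (N i) (t i))
    (hmesh : Tendsto (fun i ↦ mesh (N i) (t i)) l (𝓝 0)) {D : ι → ℝ → E →L[ℝ] E}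
    {D₀ : ℝ → E →L[ℝ] E} (hD₀ : ContinuousOn D₀ (Icc 0 T))
    (hD : TendstoUniformlyOn D D₀ l (Icc 0 T)) :
    Tendsto (fun i ↦ ∑ k ∈ Finset.range (N i), elog (LinearMap.det
      ((1 - ((t i (k + 1) - t i k) / 2) • D i (t i (k + 1)) : E →L[ℝ] E) : E →ₗ[ℝ] E))) l
      (𝓝 ((-(1 / 2 * ∫ s in Ioc 0 T, traceCLM ℝ E (D₀ s)) : ℝ) : EReal)) := by
  obtain ⟨C, hC⟩ := isCompact_Icc.exists_bound_of_continuousOn hD₀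
  have hbound : ∀ᶠ i in l, ∀ k < N i, ‖D i (t i (k + 1))‖ ≤ C + 1 := by
    filter_upwards [Metric.tendstoUniformlyOn_iff.1 hD 1 one_pos] with i hi k hk
    have hnode := (ht i).node_mem_Icc (Nat.succ_le_of_lt hk)
    exact (norm_le_norm_add_norm_sub _ _).trans
      (add_le_add (hC _ hnode) ((dist_eq_norm _ _).symm.trans_le (hi _ hnode).le))
  refine tendsto_sum_elog_det_one_sub ht hmesh hbound ?_
  have htrace : TendstoUniformlyOn (fun i s ↦ traceCLM ℝ E (D i (rightNode (t i) s)))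
      (fun s ↦ traceCLM ℝ E (D₀ s)) l (Ioc 0 T) :=
    (traceCLM ℝ E).uniformContinuous.comp_tendstoUniformlyOn
      (tendstoUniformlyOn_comp_rightNode ht hmesh hD₀ hD)
  have hint : IntegrableOn (fun s ↦ traceCLM ℝ E (D₀ s)) (Ioc 0 T) :=
    ((traceCLM ℝ E).continuous.comp_continuousOn hD₀).integrableOn_Icc.mono_set Ioc_subset_Icc_self
  refine (tendsto_integral_of_L1' _ hint.aestronglyMeasurable
    (.of_forall fun i ↦ (ht i).integrableOn_comp_cellIndex
      fun k ↦ traceCLM ℝ E (D i (t i (k + 1))))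
    (tendsto_eLpNorm_sub_of_tendstoUniformlyOn measurableSet_Ioc
      measure_Ioc_lt_top.ne 1 htrace)).congr
    fun i ↦ (ht i).setIntegral_comp_cellIndex fun k ↦ traceCLM ℝ E (D i (t i (k + 1)))

end LogDet

/-! ### Convergence of the terms of the log-posterior -/

section Terms

variable {ι : Type*} {l : Filter ι} {n q m : ℕ} {T : ℝ} {N : ι → ℕ} {t : ι → ℕ → ℝ}
  {x : ι → ℝ → Eu n} {x₀ : ℝ → Eu n} {z : ι → ℝ → Eu q} {z₀ : ℝ → Eu q} {ϑ : ι → Eu m} {θ : Eu m}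

lemma tendsto_detSum (ht : ∀ i, IsPartition T (N i) (t i))
    (hmesh : Tendsto (fun i ↦ mesh (N i) (t i)) l (𝓝 0))
    {Dxf : ℝ → Eu n → Eu q → Eu m → (Eu n →L[ℝ] Eu n)}
    (hDxf : Continuous fun p : ℝ × Eu n × Eu q × Eu m ↦ Dxf p.1 p.2.1 p.2.2.1 p.2.2.2)
    (hx₀ : ContinuousOn x₀ (Icc 0 T)) (hz₀ : ContinuousOn z₀ (Icc 0 T))
    (hx : TendstoUniformlyOn x x₀ l (Icc 0 T)) (hz : TendstoUniformlyOn z z₀ l (Icc 0 T))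
    (hϑ : Tendsto ϑ l (𝓝 θ)) :
    Tendsto (fun i ↦ detSum (N i) (t i) Dxf (x i) (z i) (ϑ i)) l
      (𝓝 ((-(1 / 2 * ∫ s in Ioc 0 T,
        LinearMap.trace ℝ (Eu n) (Dxf s (x₀ s) (z₀ s) θ : Eu n →ₗ[ℝ] Eu n)) : ℝ) : EReal)) := by
  have hlim := tendsto_sum_elog_det_one_sub_of_tendstoUniformlyOn ht hmesh
    (continuousOn_comp_path hDxf hx₀ hz₀ θ)
    (tendstoUniformlyOn_comp_path hDxf isCompact_Icc hx₀ hz₀ hx hz hϑ)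
  simpa only [traceCLM_apply, detSum] using hlim

lemma trapSum_eq_setIntegral {N : ℕ} {t : ℕ → ℝ} (ht : IsPartition T N t)
    (f : ℝ → Eu n → Eu q → Eu m → Eu n) (A : Eu n → Eu n) {x x' : ℝ → Eu n} (hx : IsW2 T x x')
    (z : ℝ → Eu q) (ϑ : Eu m) :
    trapSum N t f A x z ϑ = ∫ s in Ioc 0 T,
      ‖A (cellAverage t x' s - trapMean t (fun r ↦ f r (x r) (z r) ϑ) s)‖ ^ 2 := by
  refine Eq.trans ?_ (ht.setIntegral_comp_cellIndex fun k ↦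
    ‖A ((⨍ r in Ioc (t k) (t (k + 1)), x' r) - (1 / 2 : ℝ) • (f (t k) (x (t k)) (z (t k)) ϑ +
      f (t (k + 1)) (x (t (k + 1))) (z (t (k + 1))) ϑ))‖ ^ 2).symm
  refine Finset.sum_congr rfl fun k hk ↦ ?_
  have hk : k < N := Finset.mem_range.1 hk
  rw [smul_eq_mul, hx.differenceQuotient_eq_average (ht.node_mem_Icc hk.le).1 (ht.lt_succ k hk).le
    (ht.node_mem_Icc hk).2, smul_add, sub_sub]

lemma tendsto_trapSum (ht : ∀ i, IsPartition T (N i) (t i))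
    (hmesh : Tendsto (fun i ↦ mesh (N i) (t i)) l (𝓝 0))
    {f : ℝ → Eu n → Eu q → Eu m → Eu n}
    (hf : Continuous fun p : ℝ × Eu n × Eu q × Eu m ↦ f p.1 p.2.1 p.2.2.1 p.2.2.2)
    (A : Eu n →L[ℝ] Eu n) {x' : ι → ℝ → Eu n} {x₀' : ℝ → Eu n}
    (hxW2 : ∀ i, IsW2 T (x i) (x' i)) (hx₀W2 : IsW2 T x₀ x₀')
    (hz₀ : ContinuousOn z₀ (Icc 0 T))
    (hx : Tendsto (fun i ↦ W2dist T (x i) (x' i) x₀ x₀') l (𝓝 0))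
    (hz : TendstoUniformlyOn z z₀ l (Icc 0 T)) (hϑ : Tendsto ϑ l (𝓝 θ)) :
    Tendsto (fun i ↦ trapSum (N i) (t i) f A (x i) (z i) (ϑ i)) l
      (𝓝 (∫ s in Ioc 0 T, ‖A (f s (x₀ s) (z₀ s) θ - x₀' s)‖ ^ 2)) := by
  have hx₀ := hx₀W2.continuousOn
  have hfx₀ := continuousOn_comp_path hf hx₀ hz₀ θ
  have hfx₀Lp := memLp_of_continuousOn_Icc hfx₀ 2
  have haverage : Tendsto (fun i ↦ eLpNorm (cellAverage (t i) (x' i) - x₀') 2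
      (volume.restrict (Ioc 0 T))) l (𝓝 0) :=
    tendsto_eLpNorm_cellAverage_sub ht hmesh (fun i ↦ (hxW2 i).memLp) hx₀W2.memLp
      (IsW2.tendsto_eLpNorm_deriv_sub hxW2 hx₀W2 hx)
  have hmean := tendsto_eLpNorm_sub_of_tendstoUniformlyOn measurableSet_Ioc
    (measure_Ioc_lt_top (μ := volume)).ne 2 (tendstoUniformlyOn_trapMean ht hmesh hfx₀
      (tendstoUniformlyOn_comp_path hf isCompact_Icc hx₀ hz₀ (IsW2.tendstoUniformlyOn hxW2 hx₀W2 hx)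
        hz hϑ))
  have hdiff := tendsto_eLpNorm_clm_comp_sub A (tendsto_eLpNorm_sub_sub_sub one_le_two
    (fun i ↦ (ht i).memLp_cellAverage (x' i) 2) hx₀W2.memLp (fun i ↦ (ht i).memLp_trapMean _ 2)
    hfx₀Lp haverage hmean)
  have hsymm : ∫ s in Ioc 0 T, ‖A (f s (x₀ s) (z₀ s) θ - x₀' s)‖ ^ 2 =
      ∫ s in Ioc 0 T, ‖A (x₀' s - f s (x₀ s) (z₀ s) θ)‖ ^ 2 := by
    simp only [map_sub, norm_sub_rev]
  rw [hsymm]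
  refine (tendsto_integral_norm_sq (fun i ↦ A.comp_memLp'
    (((ht i).memLp_cellAverage (x' i) 2).sub ((ht i).memLp_trapMean _ 2)))
    (A.comp_memLp' (hx₀W2.memLp.sub hfx₀Lp)) hdiff).congr fun i ↦ ?_
  exact (trapSum_eq_setIntegral (ht i) f A (hxW2 i) (z i) (ϑ i)).symm

end Terms

section LogPosterior

lemma limsup_le_of_tendsto_inf_principal {α ι : Type*} [CompleteLinearOrder α] [DenselyOrdered α]
    [TopologicalSpace α] [OrderTopology α] {l : Filter ι} {s : Set ι} {u : ι → α} {a : α}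
    (hu : Tendsto u (l ⊓ 𝓟 s) (𝓝 a)) (hbot : ∀ᶠ i in l, i ∉ s → u i = ⊥) : limsup u l ≤ a := by
  refine le_of_forall_gt_imp_ge_of_dense fun b hab ↦ limsup_le_of_le (h := ?_)
  filter_upwards [eventually_inf_principal.1 (hu.eventually_lt_const hab), hbot] with i hlt hbot
  by_cases hi : i ∈ s
  · exact (hlt hi).le
  · exact (hbot hi).trans_le bot_le

lemma tendsto_add_ereal {ι : Type*} {l : Filter ι} {u v : ι → EReal} {a b : EReal}
    (ha : a ≠ ⊤) (hb : b ≠ ⊤) (hu : Tendsto u l (𝓝 a)) (hv : Tendsto v l (𝓝 b)) :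
    Tendsto (fun i ↦ u i + v i) l (𝓝 (a + b)) :=
  (EReal.continuousAt_add (.inl ha) (.inr hb)).tendsto.comp (hu.prodMk_nhds hv)

variable {n q m : ℕ}

/-- `ψ` is a measurement likelihood on `[0, T]`: nonnegative, and continuous in the paths for the
supremum norm. Paths are functions on all of `ℝ`, so only their values on `[0, T]` are compared. -/
structure IsPathLikelihood (T : ℝ) (ψ : (ℝ → Eu n) → (ℝ → Eu q) → Eu m → ℝ) : Prop where
  nonneg : ∀ a b c, 0 ≤ ψ a b c
  continuous : ∀ (a : ℝ → Eu n) (b : ℝ → Eu q) (c : Eu m), ContinuousOn a (Icc 0 T) →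
    ContinuousOn b (Icc 0 T) → ∀ ε > (0 : ℝ), ∃ δ > (0 : ℝ),
    ∀ (a' : ℝ → Eu n) (b' : ℝ → Eu q) (c' : Eu m), ContinuousOn a' (Icc 0 T) →
      ContinuousOn b' (Icc 0 T) → (∀ t ∈ Icc (0 : ℝ) T, ‖a' t - a t‖ ≤ δ) →
      (∀ t ∈ Icc (0 : ℝ) T, ‖b' t - b t‖ ≤ δ) → ‖c' - c‖ ≤ δ → |ψ a' b' c' - ψ a b c| ≤ ε

/-- `pr` is an (unnormalized) prior density of the initial state and the parameters. -/
structure IsPriorDensity (pr : Eu n → Eu q → Eu m → ℝ) : Prop where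
  nonneg : ∀ a b c, 0 ≤ pr a b c
  continuous : Continuous fun p : Eu n × Eu q × Eu m ↦ pr p.1 p.2.1 p.2.2

/-- `Dxf` is the Jacobian `∇ₓf`, and it is jointly continuous. -/
structure IsStateJacobian (f : ℝ → Eu n → Eu q → Eu m → Eu n)
    (Dxf : ℝ → Eu n → Eu q → Eu m → (Eu n →L[ℝ] Eu n)) : Prop where
  hasFDerivAt : ∀ t a b c, HasFDerivAt (fun ξ ↦ f t ξ b c) (Dxf t a b c) a
  continuous : Continuous fun p : ℝ × Eu n × Eu q × Eu m ↦ Dxf p.1 p.2.1 p.2.2.1 p.2.2.2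

variable {ι : Type*} {l : Filter ι} {T : ℝ} {x : ι → ℝ → Eu n} {x₀ : ℝ → Eu n} {ϑ : ι → Eu m}
  {θ : Eu m}

lemma IsPathLikelihood.tendsto {ψ : (ℝ → Eu n) → (ℝ → Eu q) → Eu m → ℝ}
    (hψ : IsPathLikelihood T ψ) {z : ι → ℝ → Eu q} {z₀ : ℝ → Eu q}
    (hxc : ∀ᶠ i in l, ContinuousOn (x i) (Icc 0 T)) (hzc : ∀ᶠ i in l, ContinuousOn (z i) (Icc 0 T))
    (hx₀ : ContinuousOn x₀ (Icc 0 T)) (hz₀ : ContinuousOn z₀ (Icc 0 T))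
    (hx : TendstoUniformlyOn x x₀ l (Icc 0 T)) (hz : TendstoUniformlyOn z z₀ l (Icc 0 T))
    (hϑ : Tendsto ϑ l (𝓝 θ)) :
    Tendsto (fun i ↦ ψ (x i) (z i) (ϑ i)) l (𝓝 (ψ x₀ z₀ θ)) := by
  rw [Metric.tendsto_nhds]
  intro ε hε
  obtain ⟨δ, hδ, hclose⟩ := hψ.continuous x₀ z₀ θ hx₀ hz₀ (ε / 2) (half_pos hε)
  filter_upwards [hxc, hzc, Metric.tendstoUniformlyOn_iff.1 hx δ hδ,
    Metric.tendstoUniformlyOn_iff.1 hz δ hδ, Metric.tendsto_nhds.1 hϑ δ hδ] with i hxc hzc hx hz hϑ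
  simp only [dist_comm (x₀ _), dist_comm (z₀ _), dist_eq_norm] at hx hz hϑ
  exact (hclose _ _ _ hxc hzc (fun t ht ↦ (hx t ht).le) (fun t ht ↦ (hz t ht).le) hϑ.le).trans_lt
    (half_lt_self hε)

variable {S : Set (Eu m)} {f : ℝ → Eu n → Eu q → Eu m → Eu n} {h : ℝ → Eu n → Eu q → Eu m → Eu q}
  {Dxf : ℝ → Eu n → Eu q → Eu m → (Eu n →L[ℝ] Eu n)}
  {ψ : (ℝ → Eu n) → (ℝ → Eu q) → Eu m → ℝ} {pr : Eu n → Eu q → Eu m → ℝ} {A : Eu n →L[ℝ] Eu n}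
  {N : ι → ℕ} {t : ι → ℕ → ℝ} {x' : ι → ℝ → Eu n} {x₀' : ℝ → Eu n} {ζ : ι → Eu q} {z₀ : Eu q}
  {L : ι → EReal} {Lv : EReal} {Lh : ℝ}

lemma tendsto_of_trapVal (ht : ∀ i, IsPartition T (N i) (t i))
    (hmesh : Tendsto (fun i ↦ mesh (N i) (t i)) l (𝓝 0))
    (hf : Continuous fun p : ℝ × Eu n × Eu q × Eu m ↦ f p.1 p.2.1 p.2.2.1 p.2.2.2)
    (hh : Continuous fun p : ℝ × Eu n × Eu q × Eu m ↦ h p.1 p.2.1 p.2.2.1 p.2.2.2)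
    (hLh : 0 ≤ Lh)
    (hLip : ∀ ϑ ∈ S, ∀ s ∈ Icc 0 T, ∀ a b b', ‖h s a b ϑ - h s a b' ϑ‖ ≤ Lh * ‖b - b'‖)
    (hDxf : IsStateJacobian f Dxf) (hψ : IsPathLikelihood T ψ) (hpr : IsPriorDensity pr)
    (hxW2 : ∀ i, IsW2 T (x i) (x' i)) (hx₀W2 : IsW2 T x₀ x₀')
    (hx : Tendsto (fun i ↦ W2dist T (x i) (x' i) x₀ x₀') l (𝓝 0)) (hζ : Tendsto ζ l (𝓝 z₀))
    (hϑ : Tendsto ϑ l (𝓝 θ)) (hadm : ∀ᶠ i in l, IsPL T (N i) (t i) (x i) ∧ ϑ i ∈ S) (hθ : θ ∈ S)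
    (hL : ∀ᶠ i in l, TrapVal T (N i) (t i) S f h Dxf ψ pr A (x i) (ζ i) (ϑ i) (L i))
    (hLv : OMVal T S f h Dxf ψ pr A x₀ x₀' z₀ θ Lv) : Tendsto L l (𝓝 Lv) := by
  obtain ⟨z, hz, hode, rfl⟩ := hLv.2 hθ
  choose! zh hzh hval using fun i (hi : TrapVal T (N i) (t i) S f h Dxf ψ pr A (x i) (ζ i) (ϑ i)
    (L i) ∧ IsPL T (N i) (t i) (x i) ∧ ϑ i ∈ S) ↦ hi.1.2 hi.2
  have hgood := hL.and hadm
  have hx₀ := hx₀W2.continuousOn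
  have hxunif := IsW2.tendstoUniformlyOn hxW2 hx₀W2 hx
  have hzunif := tendstoUniformlyOn_trapPath ht hmesh hh hLh (hadm.mono fun i hi ↦ hLip _ hi.2)
    (hgood.mono hzh) hx₀ hz hode hxunif hζ hϑ
  have hlikelihood := hψ.tendsto (.of_forall fun i ↦ (hxW2 i).continuousOn)
    (hgood.mono fun i hi ↦ (hzh i hi).continuousOn (ht i)) hx₀ hz hxunif hzunif hϑ
  have hx0 : Tendsto (fun i ↦ x i 0) l (𝓝 (x₀ 0)) := tendsto_iff_norm_sub_tendsto_zero.2 <|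
    squeeze_zero (fun _ ↦ norm_nonneg _) (fun _ ↦ norm_zero_sub_zero_le_W2dist ..) hx
  have hprior : Tendsto (fun i ↦ pr (x i 0) (ζ i) (ϑ i)) l (𝓝 (pr (x₀ 0) z₀ θ)) :=
    (hpr.continuous.tendsto (x₀ 0, z₀, θ)).comp (hx0.prodMk_nhds (hζ.prodMk_nhds hϑ))
  have hdet := tendsto_detSum ht hmesh hDxf.continuous hx₀ hz hxunif hzunif hϑ
  have henergy := (continuous_coe_real_ereal.tendsto _).comp
    ((tendsto_trapSum ht hmesh hf A hxW2 hx₀W2 hz hx hzunif hϑ).const_mul (1 / 2)).neg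
  have hlog := tendsto_add_ereal (elog_ne_top _) (elog_ne_top _)
    ((continuous_elog.tendsto _).comp hlikelihood) ((continuous_elog.tendsto _).comp hprior)
  have hlog_ne_top := EReal.add_ne_top (elog_ne_top (ψ x₀ z θ)) (elog_ne_top (pr (x₀ 0) z₀ θ))
  have hsum := tendsto_add_ereal (EReal.add_ne_top hlog_ne_top (EReal.coe_ne_top _))
    (EReal.coe_ne_top _) (tendsto_add_ereal hlog_ne_top (EReal.coe_ne_top _) hlog hdet) henergy
  rw [sub_eq_add_neg, sub_eq_add_neg, ← EReal.coe_neg, ← EReal.coe_neg, add_right_comm]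
  refine hsum.congr' (hgood.mono fun i hi ↦ ?_)
  simp only [hval i hi, sub_eq_add_neg, ← EReal.coe_neg, Function.comp_apply]

end LogPosterior

lemma tendsto_of_W2dist_add_norm_add_norm {n q m : ℕ} {ι : Type*} {l : Filter ι} {T : ℝ}
    {x x' : ι → ℝ → Eu n} {x₀ x₀' : ℝ → Eu n} {ζ : ι → Eu q} {z₀ : Eu q} {ϑ : ι → Eu m} {θ : Eu m}
    (hdist : Tendsto (fun i ↦ W2dist T (x i) (x' i) x₀ x₀' + ‖ζ i - z₀‖ + ‖ϑ i - θ‖) l (𝓝 0)) :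
    Tendsto (fun i ↦ W2dist T (x i) (x' i) x₀ x₀') l (𝓝 0) ∧ Tendsto ζ l (𝓝 z₀) ∧
      Tendsto ϑ l (𝓝 θ) := by
  have hW2 (i) : 0 ≤ W2dist T (x i) (x' i) x₀ x₀' := Real.sqrt_nonneg _
  refine ⟨squeeze_zero hW2 (fun i ↦ ?_) hdist, tendsto_iff_norm_sub_tendsto_zero.2 <|
    squeeze_zero (fun _ ↦ norm_nonneg _) (fun i ↦ ?_) hdist, tendsto_iff_norm_sub_tendsto_zero.2 <|
    squeeze_zero (fun _ ↦ norm_nonneg _) (fun i ↦ ?_) hdist⟩ <;>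
  linarith [hW2 i, norm_nonneg (ζ i - z₀), norm_nonneg (ϑ i - θ)]

-- On a coarse grid the implicit trapezoidal step may have no solution, whence the `∀ᶠ i`.
theorem stmt14_general {n q m : ℕ} {T : ℝ} {N : ℕ → ℕ} {t : ℕ → ℕ → ℝ}
    (ht : ∀ i, IsPartition T (N i) (t i))
    (hmesh : Tendsto (fun i ↦ mesh (N i) (t i)) atTop (𝓝 0)) {S : Set (Eu m)} (hS : IsClosed S)
    {f : ℝ → Eu n → Eu q → Eu m → Eu n} {h : ℝ → Eu n → Eu q → Eu m → Eu q}
    (hf : Continuous fun p : ℝ × Eu n × Eu q × Eu m ↦ f p.1 p.2.1 p.2.2.1 p.2.2.2)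
    (hh : Continuous fun p : ℝ × Eu n × Eu q × Eu m ↦ h p.1 p.2.1 p.2.2.1 p.2.2.2)
    {Lh : ℝ} (hLh : 0 ≤ Lh)
    (hLip : ∀ ϑ ∈ S, ∀ s ∈ Icc 0 T, ∀ a b b', ‖h s a b ϑ - h s a b' ϑ‖ ≤ Lh * ‖b - b'‖)
    {Dxf : ℝ → Eu n → Eu q → Eu m → (Eu n →L[ℝ] Eu n)} (hDxf : IsStateJacobian f Dxf)
    {ψ : (ℝ → Eu n) → (ℝ → Eu q) → Eu m → ℝ} (hψ : IsPathLikelihood T ψ)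
    {pr : Eu n → Eu q → Eu m → ℝ} (hpr : IsPriorDensity pr) (A : Eu n →L[ℝ] Eu n) :
    (∀ (x x' : ℕ → ℝ → Eu n) (ζ : ℕ → Eu q) (ϑ : ℕ → Eu m) (x₀ x₀' : ℝ → Eu n) (z₀ : Eu q)
      (θ : Eu m), (∀ i, IsW2 T (x i) (x' i)) → IsW2 T x₀ x₀' →
      Tendsto (fun i ↦ W2dist T (x i) (x' i) x₀ x₀' + ‖ζ i - z₀‖ + ‖ϑ i - θ‖) atTop (𝓝 0) →
      ∀ (L : ℕ → EReal) (Lv : EReal),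
        (∀ᶠ i in atTop, TrapVal T (N i) (t i) S f h Dxf ψ pr A (x i) (ζ i) (ϑ i) (L i)) →
        OMVal T S f h Dxf ψ pr A x₀ x₀' z₀ θ Lv → limsup L atTop ≤ Lv) ∧
    (∀ (x₀ x₀' : ℝ → Eu n) (z₀ : Eu q) (θ : Eu m), IsW2 T x₀ x₀' →
      ∃ (x x' : ℕ → ℝ → Eu n) (ζ : ℕ → Eu q) (ϑ : ℕ → Eu m), (∀ i, IsW2 T (x i) (x' i)) ∧
        Tendsto (fun i ↦ W2dist T (x i) (x' i) x₀ x₀' + ‖ζ i - z₀‖ + ‖ϑ i - θ‖) atTop (𝓝 0) ∧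
        ∀ (L : ℕ → EReal) (Lv : EReal),
          (∀ᶠ i in atTop, TrapVal T (N i) (t i) S f h Dxf ψ pr A (x i) (ζ i) (ϑ i) (L i)) →
          OMVal T S f h Dxf ψ pr A x₀ x₀' z₀ θ Lv → Lv ≤ liminf L atTop) := by
  refine ⟨fun x x' ζ ϑ x₀ x₀' z₀ θ hx hx₀ hdist L Lv hL hLv ↦ ?_, fun x₀ x₀' z₀ θ hx₀ ↦ ?_⟩
  · obtain ⟨hW2, hζ, hϑ⟩ := tendsto_of_W2dist_add_norm_add_norm hdist
    let s := {i | IsPL T (N i) (t i) (x i) ∧ ϑ i ∈ S}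
    refine limsup_le_of_tendsto_inf_principal (s := s) ?_ (hL.mono fun i hi ↦ hi.1)
    have hle : atTop ⊓ 𝓟 s ≤ atTop := inf_le_left
    have hadm : ∀ᶠ i in atTop ⊓ 𝓟 s, i ∈ s := mem_inf_of_right (mem_principal_self s)
    rcases eq_or_neBot (atTop ⊓ 𝓟 s) with hempty | _
    · simp only [hempty, tendsto_bot]
    have hθ : θ ∈ S := hS.mem_of_tendsto (hϑ.mono_left hle) (hadm.mono fun _ hi ↦ hi.2)
    exact tendsto_of_trapVal ht (hmesh.mono_left hle) hf hh hLh hLip hDxf hψ hpr hx hx₀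
      (hW2.mono_left hle) (hζ.mono_left hle) (hϑ.mono_left hle) hadm hθ (hL.filter_mono hle) hLv
  · obtain ⟨x, x', hPL, hx, hW2⟩ := exists_isPL_tendsto_W2dist ht hmesh hx₀
    refine ⟨x, x', fun _ ↦ z₀, fun _ ↦ θ, hx, by simpa using hW2, fun L Lv hL hLv ↦ ?_⟩
    by_cases hθ : θ ∈ S
    · exact (tendsto_of_trapVal ht hmesh hf hh hLh hLip hDxf hψ hpr hx hx₀ hW2 tendsto_const_nhds
        tendsto_const_nhds (.of_forall fun i ↦ ⟨hPL i, hθ⟩) hθ hL hLv).liminf_eq.ge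
    · exact (hLv.1 hθ).trans_le bot_le

/-- Theorem 3.14: the trapezoidally-discretized joint state-path and
parameter log-posteriors `ℓ̂_i` hypo-converge, on `𝒵 = W²_n × ℝ^q × ℝ^m` with the
`W²`-norm topology on the first factor, to the continuous-time (Onsager–Machlup)
log-posterior `ℓ`.  Hypo-convergence is spelled out sequentially: (a)
`limsup ℓ̂_i(ζ_i) ≤ ℓ(ζ)` along every convergent sequence `ζ_i → ζ` in `𝒵`, and
(b) every `ζ ∈ 𝒵` is the limit of a sequence with `liminf ℓ̂_i(ζ_i) ≥ ℓ(ζ)`. -/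
theorem stmt14 {n q m : ℕ} (tf : ℝ) (htf : 0 < tf)
    -- nested partitions with vanishing mesh
    (N : ℕ → ℕ) (hN1 : ∀ i, 1 ≤ N i) (tP : ℕ → ℕ → ℝ)
    (htP0 : ∀ i, tP i 0 = 0) (htPN : ∀ i, tP i (N i) = tf)
    (htPmono : ∀ i, ∀ k < N i, tP i k < tP i (k + 1))
    (hnested : ∀ i, ∀ k ≤ N i, ∃ k' ≤ N (i + 1), tP (i + 1) k' = tP i k)
    (hmesh : Tendsto (fun i => ⨆ k : Fin (N i), (tP i (k.1 + 1) - tP i k.1))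
      atTop (nhds 0))
    -- closed parameter set
    (S : Set (Eu m)) (hS : IsClosed S)
    -- dynamics and their regularity
    (f : ℝ → Eu n → Eu q → Eu m → Eu n) (h : ℝ → Eu n → Eu q → Eu m → Eu q)
    (hfc : Continuous fun p : ℝ × Eu n × Eu q × Eu m => f p.1 p.2.1 p.2.2.1 p.2.2.2)
    (hhc : Continuous fun p : ℝ × Eu n × Eu q × Eu m => h p.1 p.2.1 p.2.2.1 p.2.2.2)
    (ρf ρh : ℝ → ℝ)
    (hρ : Tendsto (fun ε => ρf ε + ρh ε) (nhdsWithin 0 (Ioi 0)) (nhds 0))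
    (hfu : ∀ ε > (0:ℝ), ∀ t ∈ Icc (0:ℝ) tf, ∀ t' ∈ Icc (0:ℝ) tf,
      ∀ (a a' : Eu n) (b b' : Eu q) (c c' : Eu m), c ∈ S → c' ∈ S →
      |t - t'| ≤ ε → ‖a - a'‖ ≤ ε → ‖b - b'‖ ≤ ε → ‖c - c'‖ ≤ ε →
      ‖f t a b c - f t' a' b' c'‖ ≤ ρf ε)
    (hhu : ∀ ε > (0:ℝ), ∀ t ∈ Icc (0:ℝ) tf, ∀ t' ∈ Icc (0:ℝ) tf,
      ∀ (a a' : Eu n) (b b' : Eu q) (c c' : Eu m), c ∈ S → c' ∈ S →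
      |t - t'| ≤ ε → ‖a - a'‖ ≤ ε → ‖b - b'‖ ≤ ε → ‖c - c'‖ ≤ ε →
      ‖h t a b c - h t' a' b' c'‖ ≤ ρh ε)
    (Lf Lh : ℝ) (hLf : 0 < Lf) (hLh : 0 < Lh)
    (hfLip : ∀ θ ∈ S, ∀ t ∈ Icc (0:ℝ) tf, ∀ (a a' : Eu n) (b b' : Eu q),
      ‖f t a b θ - f t a' b' θ‖ ≤ Lf * (‖a - a'‖ + ‖b - b'‖))
    (hhLip : ∀ θ ∈ S, ∀ t ∈ Icc (0:ℝ) tf, ∀ (a a' : Eu n) (b b' : Eu q),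
      ‖h t a b θ - h t a' b' θ‖ ≤ Lh * (‖a - a'‖ + ‖b - b'‖))
    (hmeshLip : ∀ i, ∀ k < N i, (Lf + Lh) * (tP i (k + 1) - tP i k) < 2)
    -- the Jacobian of `f` with respect to its second argument
    (Dxf : ℝ → Eu n → Eu q → Eu m → (Eu n →L[ℝ] Eu n))
    (hDxf : ∀ (t : ℝ) (a : Eu n) (b : Eu q) (c : Eu m),
      HasFDerivAt (fun ξ => f t ξ b c) (Dxf t a b c) a)
    (hDxfc : Continuous fun p : ℝ × Eu n × Eu q × Eu m =>
      Dxf p.1 p.2.1 p.2.2.1 p.2.2.2)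
    -- measurement likelihood: nonnegative, continuous w.r.t. the supremum norms
    (ψ : (ℝ → Eu n) → (ℝ → Eu q) → Eu m → ℝ)
    (hψ0 : ∀ a b c, 0 ≤ ψ a b c)
    (hψc : ∀ (a : ℝ → Eu n) (b : ℝ → Eu q) (c : Eu m), ContinuousOn a (Icc 0 tf) →
      ContinuousOn b (Icc 0 tf) → ∀ ε > (0:ℝ), ∃ δ > (0:ℝ),
      ∀ (a' : ℝ → Eu n) (b' : ℝ → Eu q) (c' : Eu m), ContinuousOn a' (Icc 0 tf) →
        ContinuousOn b' (Icc 0 tf) →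
        (∀ t ∈ Icc (0:ℝ) tf, ‖a' t - a t‖ ≤ δ) →
        (∀ t ∈ Icc (0:ℝ) tf, ‖b' t - b t‖ ≤ δ) → ‖c' - c‖ ≤ δ →
        |ψ a' b' c' - ψ a b c| ≤ ε)
    -- prior: nonnegative, continuous, vanishing outside `int S`
    (pr : Eu n → Eu q → Eu m → ℝ)
    (hpr0 : ∀ a b c, 0 ≤ pr a b c)
    (hprc : Continuous fun p : Eu n × Eu q × Eu m => pr p.1 p.2.1 p.2.2)
    (hprv : ∀ a b c, c ∉ interior S → pr a b c = 0)
    -- invertible diffusion matrix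
    (G : Eu n ≃L[ℝ] Eu n) :
    -- (a)
    (∀ (xi x'i : ℕ → ℝ → Eu n) (ζi : ℕ → Eu q) (ϑi : ℕ → Eu m)
      (x x' : ℝ → Eu n) (z0 : Eu q) (θ : Eu m),
      (∀ i, IsW2 tf (xi i) (x'i i)) → IsW2 tf x x' →
      Tendsto (fun i => W2dist tf (xi i) (x'i i) x x' + ‖ζi i - z0‖ + ‖ϑi i - θ‖)
        atTop (nhds 0) →
      ∀ (L : ℕ → EReal) (Lv : EReal),
        (∀ i, TrapVal tf (N i) (tP i) S f h Dxf ψ pr (fun v => G.symm v)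
          (xi i) (ζi i) (ϑi i) (L i)) →
        OMVal tf S f h Dxf ψ pr (fun v => G.symm v) x x' z0 θ Lv →
        limsup L atTop ≤ Lv) ∧
    -- (b)
    (∀ (x x' : ℝ → Eu n) (z0 : Eu q) (θ : Eu m), IsW2 tf x x' →
      ∃ (xi x'i : ℕ → ℝ → Eu n) (ζi : ℕ → Eu q) (ϑi : ℕ → Eu m),
        (∀ i, IsW2 tf (xi i) (x'i i)) ∧
        Tendsto (fun i => W2dist tf (xi i) (x'i i) x x' + ‖ζi i - z0‖ + ‖ϑi i - θ‖)
          atTop (nhds 0) ∧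
        ∀ (L : ℕ → EReal) (Lv : EReal),
          (∀ i, TrapVal tf (N i) (tP i) S f h Dxf ψ pr (fun v => G.symm v)
            (xi i) (ζi i) (ϑi i) (L i)) →
          OMVal tf S f h Dxf ψ pr (fun v => G.symm v) x x' z0 θ Lv →
          Lv ≤ liminf L atTop) := by
  obtain ⟨hlimsup, hrecovery⟩ := stmt14_general (fun i ↦ ⟨htP0 i, htPN i, htPmono i⟩) hmesh hS hfc
    hhc hLh.le (fun θ hθ t ht a b b' ↦ by simpa using hhLip θ hθ t ht a a b b') ⟨hDxf, hDxfc⟩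
    ⟨hψ0, hψc⟩ ⟨hpr0, hprc⟩ (G.symm : Eu n →L[ℝ] Eu n)
  refine ⟨fun xi x'i ζi ϑi x x' z0 θ hxi hx hdist L Lv hL ↦
    hlimsup xi x'i ζi ϑi x x' z0 θ hxi hx hdist L Lv (.of_forall hL), fun x x' z0 θ hx ↦ ?_⟩
  obtain ⟨xi, x'i, ζi, ϑi, hxi, hdist, hliminf⟩ := hrecovery x x' z0 θ hx
  exact ⟨xi, x'i, ζi, ϑi, hxi, hdist, fun L Lv hL ↦ hliminf L Lv (.of_forall hL)⟩
end

section
/- Let (Ω, ℰ, P) be a probability space, {𝔸_ε}_{ε ∈ ℝ_{>0}} ⊆ ℰ a family of events with P(𝔸_ε) > 0 for every ε > 0, and A : Ω → ℝ a random variable. If for every c ∈ ℝ one has limsup_{ε↓0} E[exp(cA) | 𝔸_ε] ≤ 1, then for every c ∈ ℝ one has lim_{ε↓0} E[exp(cA) | 𝔸_ε] = 1. -/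
open MeasureTheory Filter

/-!
Convexity of the exponential gives `exp x + exp (-x) ≥ 2`, so the expectations of `exp (c * A)` and
`exp (-(c * A))` under any probability measure add up to at least `2`. As neither of them exceeds
`1` asymptotically, neither can stay asymptotically below `1`.
-/

open ProbabilityTheory Topology
open scoped ENNReal

theorem tendsto_of_add_le_add_of_limsup_le {ι : Type*} {l : Filter ι} {u v : ι → ℝ≥0∞} {a b : ℝ≥0∞}
    (ha : a ≠ ∞) (hb : b ≠ ∞) (hadd : ∀ᶠ i in l, a + b ≤ u i + v i)
    (hu : limsup u l ≤ a) (hv : limsup v l ≤ b) :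
    Tendsto u l (𝓝 a) := by
  rcases l.eq_or_neBot with rfl | _
  · exact tendsto_bot
  refine tendsto_of_le_liminf_of_limsup_le ?_ hu
  calc a = a + b - b := (ENNReal.add_sub_cancel_right hb).symm
    _ ≤ a + b - limsup v l := tsub_le_tsub_left hv _
    _ = liminf (fun i => a + b - v i) l :=
      (ENNReal.liminf_const_sub l v (ENNReal.add_ne_top.2 ⟨ha, hb⟩)).symm
    _ ≤ liminf u l := liminf_le_liminf (hadd.mono fun _ => tsub_le_iff_right.2)

theorem two_le_ofReal_exp_add_ofReal_exp_neg (x : ℝ) :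
    2 ≤ ENNReal.ofReal (Real.exp x) + ENNReal.ofReal (Real.exp (-x)) := by
  rw [← ENNReal.ofReal_add (Real.exp_nonneg _) (Real.exp_nonneg _), ← ENNReal.ofReal_ofNat]
  exact ENNReal.ofReal_le_ofReal (by linarith [Real.one_le_cosh x, Real.cosh_eq x])

theorem two_le_lintegral_exp_add_lintegral_exp_neg {Ω : Type*} [MeasurableSpace Ω] {μ : Measure Ω}
    [IsProbabilityMeasure μ] {X : Ω → ℝ} (hX : AEMeasurable X μ) :
    2 ≤ ∫⁻ ω, ENNReal.ofReal (Real.exp (X ω)) ∂μ + ∫⁻ ω, ENNReal.ofReal (Real.exp (-X ω)) ∂μ :=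
  calc 2 = ∫⁻ _, 2 ∂μ := by simp
    _ ≤ ∫⁻ ω, ENNReal.ofReal (Real.exp (X ω)) + ENNReal.ofReal (Real.exp (-X ω)) ∂μ :=
      lintegral_mono fun ω => two_le_ofReal_exp_add_ofReal_exp_neg (X ω)
    _ = _ := lintegral_add_left' (by fun_prop) _

theorem lintegral_cond_eq_setLIntegral_div {Ω : Type*} [MeasurableSpace Ω] (μ : Measure Ω)
    (s : Set Ω) (f : Ω → ℝ≥0∞) :
    ∫⁻ ω, f ω ∂μ[|s] = (∫⁻ ω in s, f ω ∂μ) / μ s := by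
  rw [ProbabilityTheory.cond, lintegral_smul_measure, smul_eq_mul, mul_comm, div_eq_mul_inv]

theorem stmt18_general {ι : Type*} {l : Filter ι} {Ω : ι → Type*} [∀ i, MeasurableSpace (Ω i)]
    {μ : ∀ i, Measure (Ω i)} (hμ : ∀ᶠ i in l, IsProbabilityMeasure (μ i))
    {X : ∀ i, Ω i → ℝ} (hX : ∀ᶠ i in l, AEMeasurable (X i) (μ i))
    (hpos : limsup (fun i => ∫⁻ ω, ENNReal.ofReal (Real.exp (X i ω)) ∂μ i) l ≤ 1)
    (hneg : limsup (fun i => ∫⁻ ω, ENNReal.ofReal (Real.exp (-X i ω)) ∂μ i) l ≤ 1) :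
    Tendsto (fun i => ∫⁻ ω, ENNReal.ofReal (Real.exp (X i ω)) ∂μ i) l (𝓝 1) := by
  refine tendsto_of_add_le_add_of_limsup_le ENNReal.one_ne_top ENNReal.one_ne_top ?_ hpos hneg
  filter_upwards [hμ, hX] with i _ hXi
  exact one_add_one_eq_two.trans_le (two_le_lintegral_exp_add_lintegral_exp_neg hXi)

/-- Lemma on limits of conditional exponential moments:
if `limsup_{ε↓0} E[exp(cA) | 𝔸_ε] ≤ 1` for every `c ∈ ℝ`, then
`lim_{ε↓0} E[exp(cA) | 𝔸_ε] = 1` for every `c ∈ ℝ`. Conditional expectations of the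
nonnegative random variables `exp(cA)` are taken with values in `[0, ∞]`. -/
theorem stmt18 {Ω : Type*} [MeasurableSpace Ω] (P : Measure Ω) [IsProbabilityMeasure P]
    (B : ℝ → Set Ω) (hBmeas : ∀ ε > (0:ℝ), MeasurableSet (B ε))
    (hBpos : ∀ ε > (0:ℝ), 0 < P (B ε))
    (A : Ω → ℝ) (hA : Measurable A)
    (hup : ∀ c : ℝ, limsup
      (fun ε => (∫⁻ ω in B ε, ENNReal.ofReal (Real.exp (c * A ω)) ∂P) / P (B ε))
      (nhdsWithin 0 (Set.Ioi 0)) ≤ 1) :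
    ∀ c : ℝ, Tendsto
      (fun ε => (∫⁻ ω in B ε, ENNReal.ofReal (Real.exp (c * A ω)) ∂P) / P (B ε))
      (nhdsWithin 0 (Set.Ioi 0)) (nhds 1) := by
  intro c
  simp only [← lintegral_cond_eq_setLIntegral_div] at hup ⊢
  have hprob : ∀ᶠ ε in 𝓝[>] (0 : ℝ), IsProbabilityMeasure P[|B ε] :=
    eventually_mem_nhdsWithin.mono fun ε hε => cond_isProbabilityMeasure (hBpos ε hε).ne'
  exact stmt18_general hprob (.of_forall fun _ => (hA.const_mul c).aemeasurable) (hup c)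
    (by simpa only [neg_mul] using hup (-c))
end
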